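/- arXiv:2601.21195 — 3 statements merged into one kernel-verified Lean document; each statement's English description precedes it below -/
import Mathlib

section
/- Let q be a prime power and x = (x_1,…,x_n) arbitrary weights. Identify each coset gB ∈ G/B with the complete flag F = (V_0 ⊆ V_1 ⊆ ⋯ ⊆ V_n) of 𝔽_q^n in which V_i is the span of the first i columns of the distinguished representative of gB. Then for every complete flag F, F · T_{G/B}(q,x) = ∑_{lines L ⊆ 𝔽_q^n} (x_{i(L)}/q^{n−i(L)}) · (V_0 ⊆ L ⊆ L+V_1 ⊆ ⋯ ⊆ L+V_{n−1} ⊆ V_n)^, where the sum is over all 1-dimensional subspaces L of 𝔽_q^n, i(L) is the unique index such that L = span(e_{i(L)} + ∑_{k>i(L)} c_k e_k) for some coefficients c_k ∈ 𝔽_q, and ^ denotes removal of the unique repeated subspace in the chain. Consequently, the transition matrix of T_{G/B}(q,x) acting on the right equals the transpose of the transition matrix of the left-multiplication operator by ∑_L (x_{i(L)}/q^{n−i(L)})·L in the q-free left regular band of partial flags. -/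
open scoped Classical
set_option synthInstance.maxHeartbeats 1000000
set_option maxHeartbeats 1000000

noncomputable section

namespace QTsetlin

/-- `M` is upper triangular. -/
def upperTri {F : Type} [Field F] {n : ℕ} (M : Matrix (Fin n) (Fin n) F) : Prop :=
  ∀ i j : Fin n, j < i → M i j = 0

/-- `M` is lower triangular. -/
def lowerTri {F : Type} [Field F] {n : ℕ} (M : Matrix (Fin n) (Fin n) F) : Prop :=
  ∀ i j : Fin n, i < j → M i j = 0

variable (F : Type) [Field F] [Fintype F] [DecidableEq F] (n : ℕ)

/-- The general linear group `G = GL_n(F_q)`. -/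
abbrev GLn := GL (Fin n) F

/-- The Borel subgroup `B` of invertible upper triangular matrices. -/
def Bsub : Subgroup (GLn F n) where
  carrier := {g | upperTri (g : Matrix (Fin n) (Fin n) F)}
  one_mem' := by
    intro i j hij
    simp [Matrix.one_apply, (Fin.ne_of_lt hij).symm]
  mul_mem' := by
    intro a b ha hb i j hij
    exact Matrix.BlockTriangular.mul ha hb hij
  inv_mem' := by
    intro a ha
    have hdet : IsUnit ((a : Matrix (Fin n) (Fin n) F).det) :=
      (Matrix.isUnit_iff_isUnit_det _).mp a.isUnit
    have hinv : Invertible (a : Matrix (Fin n) (Fin n) F) :=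
      Matrix.invertibleOfIsUnitDet _ hdet
    have h2 : ((a : Matrix (Fin n) (Fin n) F)⁻¹).BlockTriangular (id : Fin n → Fin n) :=
      Matrix.blockTriangular_inv_of_blockTriangular ha
    show upperTri ((a⁻¹ : GLn F n) : Matrix (Fin n) (Fin n) F)
    rw [show ((a⁻¹ : GLn F n) : Matrix (Fin n) (Fin n) F)
        = (a : Matrix (Fin n) (Fin n) F)⁻¹ from Matrix.coe_units_inv a]
    exact h2

/-- The set of cosets `G/B`. -/
abbrev Cosets := GLn F n ⧸ Bsub F n

/-- permutation matrix of `π`: entry 1 in positions `(π j, j)`. -/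
def permMat (π : Equiv.Perm (Fin n)) : Matrix (Fin n) (Fin n) F :=
  fun i j => if π j = i then 1 else 0

lemma permMat_mul (π σ : Equiv.Perm (Fin n)) :
    permMat F n π * permMat F n σ = permMat F n (π * σ) := by
  ext i j
  rw [Matrix.mul_apply]
  simp only [permMat, mul_ite, ite_mul, one_mul, mul_one, mul_zero, zero_mul]
  rw [Finset.sum_eq_single (σ j)]
  · by_cases h : π (σ j) = i <;> simp [Equiv.Perm.mul_apply, h]
  · intro k _ hk
    simp [hk.symm]
  · simp

lemma permMat_one : permMat F n 1 = 1 := by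
  ext i j
  simp [permMat, Matrix.one_apply, eq_comm]

/-- The permutation matrix of `π`, as an element of `GL_n(F)`. -/
def permGL (π : Equiv.Perm (Fin n)) : GLn F n :=
  ⟨permMat F n π, permMat F n π⁻¹,
    by rw [permMat_mul, mul_inv_cancel, permMat_one],
    by rw [permMat_mul, inv_mul_cancel, permMat_one]⟩

/-- `f_i(t)`: identity matrix with an extra entry `t` in position `(r, c)`, as an
element of `GL_n(F)`. -/
def transvGL (r c : Fin n) (h : r ≠ c) (t : F) : GLn F n :=
  ⟨Matrix.transvection r c t, Matrix.transvection r c (-t),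
    by rw [Matrix.transvection_mul_transvection_same _ _ h, add_neg_cancel,
      Matrix.transvection_zero],
    by rw [Matrix.transvection_mul_transvection_same _ _ h, neg_add_cancel,
      Matrix.transvection_zero]⟩

variable (K : Type) [Field K]

/-- Matrix (row convention: row `gB` is `(gB) · T_{k+1}`) of the Hecke generator `T_{k+1}`
(paper indexing) on `ℂ[G/B]`:
`(gB)·T_i = g s_i B + ∑_{t ≠ 0} g f_i(t) B`, where `s_i` swaps (0-based) positions `k, k+1`
and `f_i(t)` has an extra entry `t` in (0-based) position `(k+1, k)`. -/
def genGB (k : ℕ) : Matrix (Cosets F n) (Cosets F n) K := fun C D =>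
  if h : k + 1 < n then
    (if (QuotientGroup.mk (C.out * permGL F n
          (Equiv.swap ⟨k, Nat.lt_of_succ_lt h⟩ ⟨k + 1, h⟩)) : Cosets F n) = D then 1 else 0)
    + ((Finset.univ.filter fun t : F => t ≠ 0 ∧
        (QuotientGroup.mk (C.out * transvGL F n ⟨k + 1, h⟩ ⟨k, Nat.lt_of_succ_lt h⟩
          (fun hc => by simp [Fin.ext_iff] at hc) t) : Cosets F n) = D).card : K)
  else 0

/-- Matrix of the product `T_k T_{k-1} ⋯ T_1` (paper indexing) on `ℂ[G/B]`. -/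
def prodGenGB : ℕ → Matrix (Cosets F n) (Cosets F n) K
  | 0 => 1
  | k + 1 => genGB F n K k * prodGenGB k

/-- The (0-based) row index of the leading entry (the pivot `1` of the distinguished coset
representative) in the first column of a representative of the coset `C`. -/
def pivotRow (C : Cosets F n) : ℕ :=
  sInf {i : ℕ | ∃ h : i < n,
    ((C.out : GLn F n) : Matrix (Fin n) (Fin n) F) ⟨i, h⟩
      ⟨0, Nat.lt_of_le_of_lt (Nat.zero_le i) h⟩ ≠ 0}

/-- Matrix of the weighting operator `X_{G/B}(q,x)`, where `q` is the cardinality of the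
field: `gB ↦ (x_i / q^{n-i}) gB` with `i` the row index of the leading 1 in the first
column of the distinguished representative of `gB`. -/
def XGB (x : Fin n → K) : Matrix (Cosets F n) (Cosets F n) K := fun C D =>
  if D = C then
    (if h : pivotRow F n C < n then
      x ⟨pivotRow F n C, h⟩ / (Fintype.card F : K) ^ (n - 1 - pivotRow F n C)
    else 0)
  else 0

/-- Matrix of the q-Tsetlin library operator
`T_{G/B}(q,x) = (∑_{i=1}^n T_{i-1} ⋯ T_1) ∘ X_{G/B}(q,x)` on `ℂ[G/B]` (row convention). -/
def TGB (x : Fin n → K) : Matrix (Cosets F n) (Cosets F n) K :=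
  (∑ k ∈ Finset.range n, prodGenGB F n K k) * XGB F n K x

/-- The coset `gB` belongs to the double coset `[π] = B⁻ π B`. -/
def inDC (π : Equiv.Perm (Fin n)) (C : Cosets F n) : Prop :=
  ∃ l b : GLn F n, lowerTri (l : Matrix (Fin n) (Fin n) F) ∧
    upperTri (b : Matrix (Fin n) (Fin n) F) ∧
    C = QuotientGroup.mk (l * permGL F n π * b)

instance (F : Type) [Field F] [Fintype F] [DecidableEq F] (n : ℕ) :
    Finite (Projectivization F (Fin n → F)) :=
  Quotient.finite _

noncomputable instance (F : Type) [Field F] [Fintype F] [DecidableEq F] (n : ℕ) :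
    Fintype (Projectivization F (Fin n → F)) := Fintype.ofFinite _

/-- `V_d`: the span of the first `d` columns of (a representative of) the coset `C`;
since right multiplication by an upper triangular matrix preserves the partial column
spans, this is the span of the first `d` columns of the distinguished representative. -/
def colSpan (C : Cosets F n) (d : ℕ) : Submodule F (Fin n → F) :=
  Submodule.span F
    ((fun j : Fin n => fun r : Fin n => ((C.out : GLn F n) : Matrix (Fin n) (Fin n) F) r j)
      '' {j : Fin n | (j : ℕ) < d})

/-- `i(L)` (0-based): for a line `L = span(e_i + ∑_{k>i} c_k e_k)`, the index `i`, i.e. the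
least index at which a (hence any) nonzero vector of `L` has a nonzero coordinate. -/
def iOfLine (p : Projectivization F (Fin n → F)) : ℕ :=
  sInf {i : ℕ | ∃ h : i < n, p.rep ⟨i, h⟩ ≠ 0}

/-- The weight `x_{i(L)} / q^{n - i(L)}` of the line `L` (with 1-based `i(L)`). -/
def lineWeight (x : Fin n → K) (p : Projectivization F (Fin n → F)) : K :=
  if h : iOfLine F n p < n then
    x ⟨iOfLine F n p, h⟩ / (Fintype.card F : K) ^ (n - 1 - iOfLine F n p)
  else 0

/-- The flag `(V_0 ⊆ L ⊆ L + V_1 ⊆ ⋯ ⊆ L + V_{n-1} ⊆ V_n)ˆ` obtained from the flag `V` by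
adding the line `L` at the front and removing the unique repeated subspace: its `d`-th
member is `L ⊔ V_{d-1}` until `L` is absorbed, and `V_d` afterwards. -/
def addLine (L : Submodule F (Fin n → F)) (V : ℕ → Submodule F (Fin n → F)) (d : ℕ) :
    Submodule F (Fin n → F) :=
  if d = 0 then ⊥ else if L ≤ V (d - 1) then V d else L ⊔ V (d - 1)

/-- The matrix (column convention) of the left-multiplication operator by the element
`∑_L (x_{i(L)}/q^{n-i(L)}) · L` of the q-free left regular band of partial flags, acting on
complete flags: the `(G, F)` entry is the coefficient of the flag `G` in the result of
multiplying the flag `F` on the left. -/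
def leftLRBMat (x : Fin n → K) : Matrix (Cosets F n) (Cosets F n) K := fun D C =>
  ∑ p : Projectivization F (Fin n → F),
    lineWeight F n K x p *
      (if ∀ d : ℕ, d ≤ n →
          colSpan F n D d = addLine F n (Projectivization.submodule p) (colSpan F n C) d
       then 1 else 0)

/-!
Write `L · C` for the product of a line `L` with the flag of `C`. The operator `T_k ⋯ T_1` maps `C`
to the sum of `L · C` over the lines `L` contained in the `(k + 1)`-st member of the flag but not in
the `k`-th one. Indeed `T_{k+1}` maps `C` to the sum of the flags differing from `C` in exactly the
`(k + 1)`-st member. If `L` first enters the flag of `C` at the `(k + 2)`-nd member, then exactly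
one of these flags contains `L` in its `(k + 1)`-st member, and its product with `L` is again
`L · C`. Since every line enters a complete flag exactly once, summing over `k` yields each
`L · C` once, and its weight is that of `L` because `L` is the first member of `L · C`.
-/

open scoped Matrix

section Covering

variable {α : Type*} [SemilatticeSup α] {a b x : α}

lemma sup_eq_of_covBy (h : a ⋖ b) (hb : x ≤ b) (ha : ¬x ≤ a) : a ⊔ x = b :=
  (h.wcovBy.eq_or_eq le_sup_left (sup_le h.le hb)).resolve_left fun hx ↦ ha (sup_eq_left.1 hx)

end Covering

section Indicator

lemma sum_range_ite_succ_and_not {R : Type*} [Ring R] (p : ℕ → Prop)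
    (hp : ∀ k, p k → p (k + 1)) (m : ℕ) :
    (∑ k ∈ Finset.range m, if p (k + 1) ∧ ¬p k then (1 : R) else 0) =
      (if p m then 1 else 0) - if p 0 then 1 else 0 := by
  rw [← Finset.sum_range_sub fun k ↦ if p k then (1 : R) else 0]
  refine Finset.sum_congr rfl fun k _ ↦ ?_
  by_cases hk : p k
  · simp [hk, hp k hk]
  · simp [hk]

lemma sum_ite_eq_one_of_existsUnique {ι R : Type*} [Fintype ι] [AddCommMonoidWithOne R]
    {p : ι → Prop} [DecidablePred p] (h : ∃! i, p i) : (∑ i, if p i then (1 : R) else 0) = 1 := by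
  obtain ⟨i, hi, huniq⟩ := h
  rw [Fintype.sum_eq_single i fun j hj ↦ if_neg fun hpj ↦ hj (huniq j hpj), if_pos hi]

end Indicator

section ColumnFlag

/-- The span of the first `d` columns of a square matrix: for an invertible matrix, the `d`-th
member of the flag that its left coset modulo upper triangular matrices represents. -/
def colFlag {R : Type*} [CommRing R] {m : ℕ} (g : Matrix (Fin m) (Fin m) R) (d : ℕ) :
    Submodule R (Fin m → R) :=
  Submodule.span R (g.col '' {j | (j : ℕ) < d})

variable {R : Type*} [CommRing R] {m : ℕ}

lemma colFlag_mono (g : Matrix (Fin m) (Fin m) R) : Monotone (colFlag g) := fun _ _ h ↦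
  Submodule.span_mono (Set.image_mono fun _ hj ↦ hj.trans_le h)

lemma colFlag_zero (g : Matrix (Fin m) (Fin m) R) : colFlag g 0 = ⊥ := by
  simp [colFlag]

lemma colFlag_succ (g : Matrix (Fin m) (Fin m) R) {d : ℕ} (hd : d < m) :
    colFlag g (d + 1) = R ∙ (g.col ⟨d, hd⟩) ⊔ colFlag g d := by
  have hset : {j : Fin m | (j : ℕ) < d + 1} = insert ⟨d, hd⟩ {j : Fin m | (j : ℕ) < d} := by
    ext j
    simp only [Set.mem_ofPred_eq, Set.mem_insert_iff, Fin.ext_iff]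
    omega
  rw [colFlag, hset, Set.image_insert_eq, Submodule.span_insert, colFlag]

lemma mulVec_mem_colFlag_iff (g : GL (Fin m) R) {d : ℕ} {a : Fin m → R} :
    g.val *ᵥ a ∈ colFlag g.val d ↔ ∀ i : Fin m, d ≤ (i : ℕ) → a i = 0 := by
  let e : (Fin m → R) ≃ₗ[R] (Fin m → R) := Matrix.toLin'OfInv g.inv_mul g.mul_inv
  let cols : Module.Basis (Fin m) R (Fin m → R) := (Pi.basisFun R (Fin m)).map e
  have hcols : ⇑cols = g.val.col := by
    ext1 j
    rw [Module.Basis.map_apply, Pi.basisFun_apply]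
    exact Matrix.mulVec_single_one g.val j
  have hrepr : ⇑(cols.repr (g.val *ᵥ a)) = a := by
    ext i
    exact congrFun (e.symm_apply_apply a) i
  rw [colFlag, ← hcols, Module.Basis.mem_span_image]
  simp only [Set.subset_def, Finset.mem_coe, Finsupp.mem_support_iff, hrepr, Set.mem_ofPred_eq]
  exact forall_congr' fun i ↦ by rw [← not_lt, not_imp_comm]

lemma mem_colFlag_iff (g : GL (Fin m) R) {d : ℕ} {w : Fin m → R} :
    w ∈ colFlag g.val d ↔ ∀ i : Fin m, d ≤ (i : ℕ) → (g⁻¹.val *ᵥ w) i = 0 := by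
  rw [← mulVec_mem_colFlag_iff g, Matrix.mulVec_mulVec, g.mul_inv, Matrix.one_mulVec]

lemma colFlag_eq_top (g : GL (Fin m) R) {d : ℕ} (hd : m ≤ d) : colFlag g.val d = ⊤ :=
  eq_top_iff.2 fun _ _ ↦ (mem_colFlag_iff g).2 fun i hi ↦ absurd (hd.trans hi) i.2.not_ge

lemma col_notMem_colFlag [Nontrivial R] (g : GL (Fin m) R) {d : ℕ} {j : Fin m}
    (hj : d ≤ (j : ℕ)) : g.val.col j ∉ colFlag g.val d := by
  rw [← Matrix.mulVec_single_one, mulVec_mem_colFlag_iff]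
  exact fun h ↦ one_ne_zero (α := R) (by simpa using h j hj)

lemma col_ne_zero [Nontrivial R] (g : GL (Fin m) R) (j : Fin m) : g.val.col j ≠ 0 := fun h ↦
  col_notMem_colFlag g (Nat.zero_le j) (h.symm ▸ Submodule.zero_mem _)

lemma colFlag_covBy_succ {𝕜 : Type*} [Field 𝕜] (g : GL (Fin m) 𝕜) {d : ℕ} (hd : d < m) :
    colFlag g.val d ⋖ colFlag g.val (d + 1) := by
  rw [colFlag_succ g.val hd]
  exact Submodule.covBy_span_singleton_sup (col_notMem_colFlag g le_rfl)

-- As `False < True`, block triangularity with respect to `i ↦ (d ≤ i)` means that the block with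
-- rows `≥ d` and columns `< d` vanishes.
lemma colFlag_mul_le (g b : GL (Fin m) R) {d : ℕ}
    (hb : b.val.BlockTriangular fun i ↦ d ≤ (i : ℕ)) :
    colFlag (g * b).val d ≤ colFlag g.val d := by
  refine Submodule.span_le.2 ?_
  rintro _ ⟨j, hj, rfl⟩
  rw [SetLike.mem_coe, ← Matrix.mulVec_single_one, Units.val_mul, ← Matrix.mulVec_mulVec,
    mulVec_mem_colFlag_iff, Matrix.mulVec_single_one]
  exact fun i hi ↦ hb (lt_of_le_not_ge (fun _ ↦ hi) fun h ↦ (h hi).not_gt hj)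

lemma colFlag_mul (g b : GL (Fin m) R) {d : ℕ}
    (hb : b.val.BlockTriangular fun i ↦ d ≤ (i : ℕ)) :
    colFlag (g * b).val d = colFlag g.val d := by
  have := b.invertible
  have hb_inv : b⁻¹.val.BlockTriangular fun i ↦ d ≤ (i : ℕ) := by
    rw [Matrix.coe_units_inv]
    exact Matrix.blockTriangular_inv_of_blockTriangular hb
  refine (colFlag_mul_le g b hb).antisymm ?_
  simpa using colFlag_mul_le (g * b) b⁻¹ hb_inv

end ColumnFlag

section CosetFlag

variable {𝕜 : Type} [Field 𝕜] {n}

lemma colSpan_mk (g : GLn 𝕜 n) (d : ℕ) :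
    colSpan 𝕜 n (QuotientGroup.mk g) d = colFlag g.val d := by
  obtain ⟨b, hb⟩ := QuotientGroup.mk_out_eq_mul (Bsub 𝕜 n) g
  refine .trans (congrArg (fun h : GLn 𝕜 n ↦ colFlag h.val d) hb) (colFlag_mul g b ?_)
  exact fun i j hij ↦ b.2 i j (lt_of_not_ge fun hji ↦ hij.not_ge fun hi ↦ hi.trans hji)

lemma colSpan_mono (C : Cosets 𝕜 n) : Monotone (colSpan 𝕜 n C) :=
  colFlag_mono C.out.val

lemma colSpan_zero (C : Cosets 𝕜 n) : colSpan 𝕜 n C 0 = ⊥ :=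
  colFlag_zero C.out.val

lemma colSpan_eq_top (C : Cosets 𝕜 n) {d : ℕ} (hd : n ≤ d) : colSpan 𝕜 n C d = ⊤ :=
  colFlag_eq_top C.out hd

lemma colSpan_covBy_succ (C : Cosets 𝕜 n) {d : ℕ} (hd : d < n) :
    colSpan 𝕜 n C d ⋖ colSpan 𝕜 n C (d + 1) :=
  colFlag_covBy_succ C.out hd

lemma isAtom_colSpan_one (hn : 0 < n) (C : Cosets 𝕜 n) : IsAtom (colSpan 𝕜 n C 1) :=
  bot_covBy_iff.1 (colSpan_zero C ▸ colSpan_covBy_succ C hn)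

lemma eq_of_colSpan_eq {C D : Cosets 𝕜 n} (h : ∀ d ≤ n, colSpan 𝕜 n C d = colSpan 𝕜 n D d) :
    C = D := by
  rw [← QuotientGroup.out_eq' C, ← QuotientGroup.out_eq' D, QuotientGroup.eq]
  intro i j hji
  have hcol : D.out.val.col j ∈ colFlag C.out.val (j + 1) :=
    (h _ j.2).ge (Submodule.subset_span ⟨j, Nat.lt_succ_self j, rfl⟩)
  exact (mem_colFlag_iff C.out).1 hcol i hji

end CosetFlag

section Adjacent

/-- Two chains are adjacent at `k` if they differ in their `k`-th member and nowhere else; for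
complete flags this is adjacency of type `k` of chambers in the building of `GL_n`. -/
def AdjacentAt {α : Type*} (k : ℕ) (V W : ℕ → α) : Prop :=
  (∀ d ≠ k, W d = V d) ∧ W k ≠ V k

namespace AdjacentAt

variable {α : Type*} [SemilatticeSup α] {k : ℕ} {V W : ℕ → α} {L : α}

lemma eq_sup (h : AdjacentAt (k + 1) V W) (hW : W k ⋖ W (k + 1)) (hL : L ≤ W (k + 1))
    (hLk : ¬L ≤ V k) : W (k + 1) = V k ⊔ L := by
  have hk : W k = V k := h.1 k k.succ_ne_self.symm
  rw [← hk, sup_eq_of_covBy hW hL (by rwa [hk])]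

lemma not_le (h : AdjacentAt (k + 1) V W) (hV : V k ⋖ V (k + 1)) (hW : W k ⋖ W (k + 1))
    (hL : L ≤ W (k + 1)) (hLk : ¬L ≤ V k) : ¬L ≤ V (k + 1) := fun hLV ↦
  h.2 ((h.eq_sup hW hL hLk).trans (sup_eq_of_covBy hV hLV hLk))

end AdjacentAt

variable {𝕜 : Type} [Field 𝕜] {n} {k : ℕ}

lemma eq_of_adjacentAt_of_le (hk : k < n) {C E E' : Cosets 𝕜 n}
    (hE : AdjacentAt (k + 1) (colSpan 𝕜 n C) (colSpan 𝕜 n E))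
    (hE' : AdjacentAt (k + 1) (colSpan 𝕜 n C) (colSpan 𝕜 n E'))
    {L : Submodule 𝕜 (Fin n → 𝕜)} (hLC : ¬L ≤ colSpan 𝕜 n C k)
    (hLE : L ≤ colSpan 𝕜 n E (k + 1)) (hLE' : L ≤ colSpan 𝕜 n E' (k + 1)) : E = E' := by
  refine eq_of_colSpan_eq fun d _ ↦ ?_
  obtain rfl | hd := eq_or_ne d (k + 1)
  · rw [hE.eq_sup (colSpan_covBy_succ E hk) hLE hLC,
      hE'.eq_sup (colSpan_covBy_succ E' hk) hLE' hLC]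
  · rw [hE.1 d hd, hE'.1 d hd]

lemma transvGL_blockTriangular {r c : Fin n} (h : r ≠ c) (t : 𝕜) {d : ℕ}
    (hd : d ≤ (r : ℕ) → d ≤ (c : ℕ)) :
    (transvGL 𝕜 n r c h t).val.BlockTriangular fun i ↦ d ≤ (i : ℕ) :=
  Matrix.blockTriangular_transvection hd t

/-- Matrices carrying a complete flag to the flags adjacent to it at `k + 1`: the column `k` of
`adjacentGL hk u` is `e_{k+1} + u e_k` in the 0-based indexing of `Fin n`. -/
def adjacentGL (hk : k + 1 < n) (u : 𝕜) : GLn 𝕜 n :=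
  transvGL 𝕜 n ⟨k, Nat.lt_of_succ_lt hk⟩ ⟨k + 1, hk⟩ (Fin.ne_of_lt k.lt_succ_self) (u - 1) *
    transvGL 𝕜 n ⟨k + 1, hk⟩ ⟨k, Nat.lt_of_succ_lt hk⟩ (Fin.ne_of_gt k.lt_succ_self) 1

lemma adjacentGL_blockTriangular (hk : k + 1 < n) (u : 𝕜) {d : ℕ} (hd : d ≠ k + 1) :
    (adjacentGL hk u).val.BlockTriangular fun i ↦ d ≤ (i : ℕ) :=
  .mul (transvGL_blockTriangular _ _ (by grind)) (transvGL_blockTriangular _ _ (by grind))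

lemma transvGL_mulVec {r c : Fin n} (h : r ≠ c) (t : 𝕜) (v : Fin n → 𝕜) :
    (transvGL 𝕜 n r c h t).val *ᵥ v = v + Pi.single r (t * v c) := by
  change (1 + Matrix.single r c t) *ᵥ v = _
  rw [Matrix.add_mulVec, Matrix.one_mulVec, Matrix.single_mulVec_eq, ← Pi.single_smul, smul_eq_mul,
    mul_one]

lemma adjacentGL_mulVec_single (hk : k + 1 < n) (u : 𝕜) :
    (adjacentGL hk u).val *ᵥ Pi.single ⟨k, Nat.lt_of_succ_lt hk⟩ 1 =
      Pi.single ⟨k + 1, hk⟩ 1 + Pi.single ⟨k, Nat.lt_of_succ_lt hk⟩ u := by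
  have hne : (⟨k + 1, hk⟩ : Fin n) ≠ ⟨k, Nat.lt_of_succ_lt hk⟩ := Fin.ne_of_gt k.lt_succ_self
  rw [adjacentGL, Units.val_mul, ← Matrix.mulVec_mulVec, transvGL_mulVec, transvGL_mulVec]
  simp only [Pi.add_apply, Pi.single_eq_same, Pi.single_eq_of_ne hne, mul_one, zero_add]
  rw [add_right_comm, ← Pi.single_add, add_sub_cancel, add_comm]

/-- The coset whose flag replaces the `(k + 1)`-st member of the flag of `C` by the span of its
`k`-th member and `c_{k+1} + u c_k`, for the columns `c_i` (0-based) of a representative of `C`. -/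
def adjacentCoset (hk : k + 1 < n) (C : Cosets 𝕜 n) (u : 𝕜) : Cosets 𝕜 n :=
  QuotientGroup.mk (C.out * adjacentGL hk u)

lemma colSpan_mk_out_mul (C : Cosets 𝕜 n) (b : GLn 𝕜 n) {d : ℕ}
    (hb : b.val.BlockTriangular fun i ↦ d ≤ (i : ℕ)) :
    colSpan 𝕜 n (QuotientGroup.mk (C.out * b)) d = colSpan 𝕜 n C d :=
  (colSpan_mk _ d).trans (colFlag_mul C.out b hb)

lemma colSpan_mk_out_mul_succ (hk : k < n) (C : Cosets 𝕜 n) (b : GLn 𝕜 n)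
    (hb : b.val.BlockTriangular fun i ↦ k ≤ (i : ℕ)) :
    colSpan 𝕜 n (QuotientGroup.mk (C.out * b)) (k + 1) =
      𝕜 ∙ (C.out.val *ᵥ b.val *ᵥ Pi.single ⟨k, hk⟩ 1) ⊔ colSpan 𝕜 n C k := by
  rw [← colSpan_mk_out_mul C b hb, colSpan_mk, colSpan_mk, colFlag_succ _ hk, Matrix.mulVec_mulVec,
    Matrix.mulVec_single_one, Units.val_mul]

lemma mk_out_mul_eq_adjacentCoset (hk : k + 1 < n) (C : Cosets 𝕜 n) {b : GLn 𝕜 n} {a u : 𝕜}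
    (hb : ∀ d ≠ k + 1, b.val.BlockTriangular fun i ↦ d ≤ (i : ℕ)) (ha : a ≠ 0)
    (hbk : b.val *ᵥ Pi.single ⟨k, Nat.lt_of_succ_lt hk⟩ 1 =
      a • (Pi.single ⟨k + 1, hk⟩ 1 + Pi.single ⟨k, Nat.lt_of_succ_lt hk⟩ u)) :
    QuotientGroup.mk (C.out * b) = adjacentCoset hk C u := by
  refine eq_of_colSpan_eq fun d _ ↦ ?_
  obtain rfl | hd := eq_or_ne d (k + 1)
  · have hk_ne : k ≠ k + 1 := k.succ_ne_self.symm
    rw [adjacentCoset, colSpan_mk_out_mul_succ (Nat.lt_of_succ_lt hk) C b (hb k hk_ne),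
      colSpan_mk_out_mul_succ (Nat.lt_of_succ_lt hk) C _
        (adjacentGL_blockTriangular hk u hk_ne), hbk,
      adjacentGL_mulVec_single, Matrix.mulVec_smul, Submodule.span_singleton_smul_eq ha.isUnit]
  · rw [adjacentCoset, colSpan_mk_out_mul C b (hb d hd),
      colSpan_mk_out_mul C _ (adjacentGL_blockTriangular hk u hd)]

lemma colSpan_adjacentCoset_of_ne (hk : k + 1 < n) (C : Cosets 𝕜 n) (u : 𝕜) {d : ℕ}
    (hd : d ≠ k + 1) : colSpan 𝕜 n (adjacentCoset hk C u) d = colSpan 𝕜 n C d :=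
  colSpan_mk_out_mul C _ (adjacentGL_blockTriangular hk u hd)

lemma mulVec_mem_colSpan_adjacentCoset (hk : k + 1 < n) (C : Cosets 𝕜 n) (u : 𝕜) :
    C.out.val *ᵥ (Pi.single ⟨k + 1, hk⟩ 1 + Pi.single ⟨k, Nat.lt_of_succ_lt hk⟩ u) ∈
      colSpan 𝕜 n (adjacentCoset hk C u) (k + 1) := by
  rw [adjacentCoset, colSpan_mk_out_mul_succ (Nat.lt_of_succ_lt hk) C _
    (adjacentGL_blockTriangular hk u k.succ_ne_self.symm), adjacentGL_mulVec_single]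
  exact Submodule.mem_sup_left (Submodule.mem_span_singleton_self _)

lemma adjacentAt_adjacentCoset (hk : k + 1 < n) (C : Cosets 𝕜 n) (u : 𝕜) :
    AdjacentAt (k + 1) (colSpan 𝕜 n C) (colSpan 𝕜 n (adjacentCoset hk C u)) := by
  refine ⟨fun d ↦ colSpan_adjacentCoset_of_ne hk C u, fun heq ↦ ?_⟩
  have hmem := heq ▸ mulVec_mem_colSpan_adjacentCoset hk C u
  simpa using (mulVec_mem_colFlag_iff C.out).1 hmem ⟨k + 1, hk⟩ le_rfl

lemma adjacentCoset_injective (hk : k + 1 < n) (C : Cosets 𝕜 n) :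
    Function.Injective (adjacentCoset hk C) := by
  intro u v huv
  by_contra hne
  let i : Fin n := ⟨k, Nat.lt_of_succ_lt hk⟩
  have hcol_E : 𝕜 ∙ (C.out.val *ᵥ Pi.single i (u - v)) ≤
      colSpan 𝕜 n (adjacentCoset hk C u) (k + 1) := by
    rw [Submodule.span_singleton_le_iff_mem, Pi.single_sub, Matrix.mulVec_sub]
    have hu := mulVec_mem_colSpan_adjacentCoset hk C u
    have hv := huv ▸ mulVec_mem_colSpan_adjacentCoset hk C v
    simpa only [Matrix.mulVec_add, add_sub_add_left_eq_sub] using sub_mem hu hv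
  have hcol_k : ¬𝕜 ∙ (C.out.val *ᵥ Pi.single i (u - v)) ≤ colSpan 𝕜 n C k := by
    rw [Submodule.span_singleton_le_iff_mem]
    intro h
    have := (mulVec_mem_colFlag_iff C.out).1 h i le_rfl
    rw [Pi.single_eq_same] at this
    exact hne (sub_eq_zero.1 this)
  refine (adjacentAt_adjacentCoset hk C u).not_le (colSpan_covBy_succ C i.2)
    (colSpan_covBy_succ _ i.2) hcol_E hcol_k ?_
  rw [Submodule.span_singleton_le_iff_mem]
  exact (mulVec_mem_colFlag_iff C.out).2 fun j hj ↦ Pi.single_eq_of_ne (Fin.ne_of_gt hj) _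

lemma exists_mem_colSpan_adjacentCoset (hk : k + 1 < n) {C : Cosets 𝕜 n} {w : Fin n → 𝕜}
    (hw : w ∈ colSpan 𝕜 n C (k + 2)) (hw' : w ∉ colSpan 𝕜 n C (k + 1)) :
    ∃ u, w ∈ colSpan 𝕜 n (adjacentCoset hk C u) (k + 1) := by
  let i : Fin n := ⟨k, Nat.lt_of_succ_lt hk⟩
  let j : Fin n := ⟨k + 1, hk⟩
  obtain ⟨a, rfl⟩ : ∃ a, w = C.out.val *ᵥ a :=
    ⟨C.out⁻¹.val *ᵥ w, by rw [Matrix.mulVec_mulVec, C.out.mul_inv, Matrix.one_mulVec]⟩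
  have ha : ∀ l : Fin n, k + 2 ≤ (l : ℕ) → a l = 0 := (mulVec_mem_colFlag_iff C.out).1 hw
  have haj : a j ≠ 0 := by
    refine fun h ↦ hw' ((mulVec_mem_colFlag_iff C.out).2 fun l hl ↦ ?_)
    obtain hl | hl := hl.eq_or_lt
    · rwa [show l = j from Fin.ext hl.symm]
    · exact ha l hl
  have hne : i ≠ j := Fin.ne_of_lt k.lt_succ_self
  let u := a i / a j
  let v : Fin n → 𝕜 := Pi.single j 1 + Pi.single i u
  have hrest : C.out.val *ᵥ (a - a j • v) ∈ colSpan 𝕜 n C k := by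
    refine (mulVec_mem_colFlag_iff C.out).2 fun l hl ↦ ?_
    obtain rfl | hli := eq_or_ne l i
    · simp [v, u, hne, mul_div_cancel₀ _ haj]
    obtain rfl | hlj := eq_or_ne l j
    · simp [v, hne.symm]
    · simp [v, hli, hlj, ha l (by grind)]
  refine ⟨u, ?_⟩
  have hv : C.out.val *ᵥ v ∈ colSpan 𝕜 n (adjacentCoset hk C u) (k + 1) :=
    mulVec_mem_colSpan_adjacentCoset hk C u
  have hrest_E := colSpan_mono _ k.le_succ <|
    (colSpan_adjacentCoset_of_ne hk C u k.succ_ne_self.symm).ge hrest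
  have hsum : C.out.val *ᵥ a = C.out.val *ᵥ (a - a j • v) + a j • C.out.val *ᵥ v := by
    rw [← Matrix.mulVec_smul, ← Matrix.mulVec_add, sub_add_cancel]
  exact hsum ▸ add_mem hrest_E (Submodule.smul_mem _ _ hv)

lemma existsUnique_adjacentCoset_eq (hk : k + 1 < n) {C E : Cosets 𝕜 n}
    (hE : AdjacentAt (k + 1) (colSpan 𝕜 n C) (colSpan 𝕜 n E)) :
    ∃! u, adjacentCoset hk C u = E := by
  have hk' : k < n := Nat.lt_of_succ_lt hk
  have hE_not_le : ¬colSpan 𝕜 n E (k + 1) ≤ colSpan 𝕜 n C (k + 1) := by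
    refine hE.not_le (colSpan_covBy_succ C hk') (colSpan_covBy_succ E hk') le_rfl ?_
    rw [← hE.1 k k.succ_ne_self.symm]
    exact (colSpan_covBy_succ E hk').lt.not_ge
  obtain ⟨w, hwE, hwC⟩ := SetLike.not_le_iff_exists.1 hE_not_le
  have hwC' : w ∈ colSpan 𝕜 n C (k + 2) :=
    hE.1 (k + 2) (k + 1).succ_ne_self ▸ colSpan_mono E (k + 1).le_succ hwE
  obtain ⟨u, hu⟩ := exists_mem_colSpan_adjacentCoset hk hwC' hwC
  have hu_eq : adjacentCoset hk C u = E := by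
    refine eq_of_adjacentAt_of_le hk' (adjacentAt_adjacentCoset hk C u) hE (L := 𝕜 ∙ w) ?_ ?_ ?_
    · exact fun h ↦ hwC (colSpan_mono C k.le_succ ((Submodule.span_singleton_le_iff_mem _ _).1 h))
    · rwa [Submodule.span_singleton_le_iff_mem]
    · rwa [Submodule.span_singleton_le_iff_mem]
  exact ⟨u, hu_eq, fun v hv ↦ adjacentCoset_injective hk C (hv.trans hu_eq.symm)⟩

lemma existsUnique_adjacentAt_le (hk : k + 1 < n) {C : Cosets 𝕜 n} {L : Submodule 𝕜 (Fin n → 𝕜)}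
    (hL : IsAtom L) (hLC : L ≤ colSpan 𝕜 n C (k + 2)) (hLC' : ¬L ≤ colSpan 𝕜 n C (k + 1)) :
    ∃! E, AdjacentAt (k + 1) (colSpan 𝕜 n C) (colSpan 𝕜 n E) ∧ L ≤ colSpan 𝕜 n E (k + 1) := by
  obtain ⟨w, hwL, hwC⟩ := SetLike.not_le_iff_exists.1 hLC'
  have hw_le : 𝕜 ∙ w ≤ L := (Submodule.span_singleton_le_iff_mem _ _).2 hwL
  have hw_ne : 𝕜 ∙ w ≠ ⊥ := fun h ↦
    hwC (Submodule.span_singleton_eq_bot.1 h ▸ zero_mem _)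
  obtain rfl : 𝕜 ∙ w = L := (hL.le_iff.1 hw_le).resolve_left hw_ne
  obtain ⟨u, hu⟩ := exists_mem_colSpan_adjacentCoset hk (hLC hwL) hwC
  refine ⟨adjacentCoset hk C u, ⟨adjacentAt_adjacentCoset hk C u, ?_⟩, ?_⟩
  · rwa [Submodule.span_singleton_le_iff_mem]
  · rintro E ⟨hE, hwE⟩
    refine eq_of_adjacentAt_of_le (Nat.lt_of_succ_lt hk) hE (adjacentAt_adjacentCoset hk C u)
      (fun h ↦ hLC' (h.trans (colSpan_mono C k.le_succ))) hwE ?_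
    rwa [Submodule.span_singleton_le_iff_mem]

lemma mk_out_mul_transvGL (hk : k + 1 < n) (C : Cosets 𝕜 n) {t : 𝕜} (ht : t ≠ 0)
    (hne : (⟨k + 1, hk⟩ : Fin n) ≠ ⟨k, Nat.lt_of_succ_lt hk⟩) :
    QuotientGroup.mk (C.out * transvGL 𝕜 n ⟨k + 1, hk⟩ ⟨k, Nat.lt_of_succ_lt hk⟩ hne t) =
      adjacentCoset hk C t⁻¹ := by
  refine mk_out_mul_eq_adjacentCoset hk C
    (fun d hd ↦ transvGL_blockTriangular _ t (by grind)) ht ?_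
  rw [transvGL_mulVec, Pi.single_eq_same, mul_one, smul_add, ← Pi.single_smul, ← Pi.single_smul,
    smul_eq_mul, smul_eq_mul, mul_one, mul_inv_cancel₀ ht, add_comm]

variable {F} {K : Type} [Field K]

lemma permGL_swap_blockTriangular (hk : k + 1 < n) {d : ℕ} (hd : d ≠ k + 1) :
    (permGL F n (Equiv.swap ⟨k, Nat.lt_of_succ_lt hk⟩ ⟨k + 1, hk⟩)).val.BlockTriangular
      fun i ↦ d ≤ (i : ℕ) := by
  intro i j hij
  obtain ⟨hi, hj⟩ : d ≤ (i : ℕ) ∧ ¬d ≤ (j : ℕ) := Classical.not_imp.1 hij.not_ge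
  refine if_neg fun hswap ↦ ?_
  rw [Equiv.swap_apply_def] at hswap
  grind

lemma mk_out_mul_permGL_swap (hk : k + 1 < n) (C : Cosets F n) :
    QuotientGroup.mk (C.out * permGL F n (Equiv.swap ⟨k, Nat.lt_of_succ_lt hk⟩ ⟨k + 1, hk⟩)) =
      adjacentCoset hk C 0 := by
  refine mk_out_mul_eq_adjacentCoset hk C (fun d ↦ permGL_swap_blockTriangular hk) one_ne_zero ?_
  ext i
  simp [permGL, permMat, Pi.single_apply, eq_comm]

lemma genGB_apply_eq_sum (hk : k + 1 < n) (C E : Cosets F n) :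
    genGB F n K k C E = ∑ u, if adjacentCoset hk C u = E then (1 : K) else 0 := by
  rw [genGB, dif_pos hk, mk_out_mul_permGL_swap hk, ← Equiv.sum_comp (Equiv.inv F),
    Fintype.sum_eq_add_sum_compl (0 : F), Finset.sum_boole]
  simp only [Equiv.inv_apply, inv_zero]
  congr 3
  ext t
  simp only [Finset.mem_filter, Finset.mem_univ, Finset.mem_compl, Finset.mem_singleton, true_and]
  exact and_congr_right fun ht ↦ by rw [mk_out_mul_transvGL hk C ht]

lemma genGB_apply (hk : k + 1 < n) (C E : Cosets F n) :
    genGB F n K k C E =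
      if AdjacentAt (k + 1) (colSpan F n C) (colSpan F n E) then 1 else 0 := by
  rw [genGB_apply_eq_sum hk]
  split_ifs with hE
  · exact sum_ite_eq_one_of_existsUnique (existsUnique_adjacentCoset_eq hk hE)
  · refine Finset.sum_eq_zero fun u _ ↦ if_neg ?_
    rintro rfl
    exact hE (adjacentAt_adjacentCoset hk C u)

end Adjacent

section AddLine

variable {𝕜 : Type} [Field 𝕜] {n} {L : Submodule 𝕜 (Fin n → 𝕜)}
  {V W : ℕ → Submodule 𝕜 (Fin n → 𝕜)} {k : ℕ}

lemma addLine_zero : addLine 𝕜 n L V 0 = ⊥ :=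
  if_pos rfl

lemma addLine_succ (d : ℕ) :
    addLine 𝕜 n L V (d + 1) = if L ≤ V d then V (d + 1) else L ⊔ V d :=
  if_neg d.succ_ne_zero

lemma addLine_one_eq_self (hV : Monotone V) (h0 : V 0 = ⊥) : addLine 𝕜 n (V 1) V = V := by
  ext1 d
  obtain _ | d := d
  · rw [addLine_zero, h0]
  rw [addLine_succ]
  split_ifs with hd
  · rfl
  · obtain rfl : d = 0 := by
      by_contra hd0
      exact hd (hV (Nat.one_le_iff_ne_zero.2 hd0))
    rw [h0, sup_bot_eq]

lemma addLine_eq_of_adjacentAt (hVW : AdjacentAt (k + 1) V W) (hV : V (k + 1) ⋖ V (k + 2))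
    (hLk : ¬L ≤ V k) (hLV : L ≤ V (k + 2)) (hLV' : ¬L ≤ V (k + 1)) (hLW : L ≤ W (k + 1)) :
    addLine 𝕜 n L W = addLine 𝕜 n L V := by
  have hVW_ne : ∀ d ≠ k + 1, W d = V d := hVW.1
  ext1 d
  obtain _ | d := d
  · rw [addLine_zero, addLine_zero]
  rw [addLine_succ, addLine_succ]
  obtain rfl | hd := eq_or_ne d (k + 1)
  · rw [if_pos hLW, if_neg hLV', hVW_ne _ (k + 1).succ_ne_self, sup_comm,
      sup_eq_of_covBy hV hLV hLV']
  · rw [hVW_ne d hd]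
    obtain rfl | hdk := eq_or_ne d k
    · rw [if_neg hLk, if_neg hLk]
    · rw [hVW_ne (d + 1) (by lia)]

end AddLine

section LineMul

/-- The flag of `D` is the product of the line `L`, as the partial flag `0 ⊆ L`, with the flag of
`C` in the `q`-free left regular band. -/
def IsLineMul {𝕜 : Type} [Field 𝕜] {n : ℕ} (L : Submodule 𝕜 (Fin n → 𝕜)) (C D : Cosets 𝕜 n) :
    Prop :=
  ∀ d ≤ n, colSpan 𝕜 n D d = addLine 𝕜 n L (colSpan 𝕜 n C) d

variable {𝕜 : Type} [Field 𝕜] {n} {k : ℕ} {C D E : Cosets 𝕜 n} {L : Submodule 𝕜 (Fin n → 𝕜)}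

lemma IsLineMul.colSpan_one_eq (h : IsLineMul L C D) (hn : 0 < n) (hL : L ≠ ⊥) :
    colSpan 𝕜 n D 1 = L := by
  rw [h 1 hn, addLine_succ, colSpan_zero, if_neg (mt le_bot_iff.1 hL), sup_bot_eq]

lemma isLineMul_iff_of_adjacentAt (hk : k + 1 < n)
    (hE : AdjacentAt (k + 1) (colSpan 𝕜 n C) (colSpan 𝕜 n E)) (hLE : L ≤ colSpan 𝕜 n E (k + 1)) :
    (¬L ≤ colSpan 𝕜 n E k ∧ IsLineMul L E D) ↔
      (L ≤ colSpan 𝕜 n C (k + 2) ∧ ¬L ≤ colSpan 𝕜 n C (k + 1)) ∧ IsLineMul L C D := by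
  have hEk : colSpan 𝕜 n E k = colSpan 𝕜 n C k := hE.1 k k.succ_ne_self.symm
  have hLC : L ≤ colSpan 𝕜 n C (k + 2) :=
    (hLE.trans (colSpan_mono E (k + 1).le_succ)).trans_eq (hE.1 _ (k + 1).succ_ne_self)
  have hnot_le : ¬L ≤ colSpan 𝕜 n C k ↔ ¬L ≤ colSpan 𝕜 n C (k + 1) :=
    ⟨hE.not_le (colSpan_covBy_succ C (Nat.lt_of_succ_lt hk))
      (colSpan_covBy_succ E (Nat.lt_of_succ_lt hk)) hLE,
      mt fun h ↦ h.trans (colSpan_mono C k.le_succ)⟩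
  rw [hEk, hnot_le, and_iff_right hLC]
  refine and_congr_right fun hLC' ↦ ?_
  rw [IsLineMul, addLine_eq_of_adjacentAt hE (colSpan_covBy_succ C hk) (hnot_le.2 hLC') hLC hLC'
    hLE, IsLineMul]

lemma isLineMul_colSpan_one_iff (hn : 0 < n) :
    ((colSpan 𝕜 n D 1 ≤ colSpan 𝕜 n C 1 ∧ ¬colSpan 𝕜 n D 1 ≤ colSpan 𝕜 n C 0) ∧
      IsLineMul (colSpan 𝕜 n D 1) C D) ↔ C = D := by
  have hD := isAtom_colSpan_one hn D
  have hC := isAtom_colSpan_one hn C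
  constructor
  · rintro ⟨⟨hle, -⟩, hmul⟩
    have hline : colSpan 𝕜 n D 1 = colSpan 𝕜 n C 1 := (hC.le_iff_eq hD.ne_bot).1 hle
    rw [IsLineMul, hline, addLine_one_eq_self (colSpan_mono C) (colSpan_zero C)] at hmul
    exact (eq_of_colSpan_eq hmul).symm
  · rintro rfl
    refine ⟨⟨le_rfl, ?_⟩, fun d _ ↦ ?_⟩
    · rw [colSpan_zero, le_bot_iff]
      exact hC.ne_bot
    · rw [addLine_one_eq_self (colSpan_mono C) (colSpan_zero C)]

end LineMul

section Operator

variable {F n} {K : Type} [Field K]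

lemma prodGenGB_apply {k : ℕ} (hk : k < n) (C D : Cosets F n) :
    prodGenGB F n K k C D =
      if (colSpan F n D 1 ≤ colSpan F n C (k + 1) ∧ ¬colSpan F n D 1 ≤ colSpan F n C k) ∧
        IsLineMul (colSpan F n D 1) C D then 1 else 0 := by
  induction k generalizing C with
  | zero => simp only [prodGenGB, Matrix.one_apply, zero_add, isLineMul_colSpan_one_iff hk]
  | succ k ih =>
    let L := colSpan F n D 1
    let Q := (L ≤ colSpan F n C (k + 2) ∧ ¬L ≤ colSpan F n C (k + 1)) ∧ IsLineMul L C D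
    have hterm (E : Cosets F n) : genGB F n K k C E * prodGenGB F n K k E D =
        if Q ∧ AdjacentAt (k + 1) (colSpan F n C) (colSpan F n E) ∧ L ≤ colSpan F n E (k + 1)
          then 1 else 0 := by
      rw [genGB_apply hk, ih (Nat.lt_of_succ_lt hk) E, ite_zero_mul_ite_zero, mul_one]
      congr 1
      have hiff (hE hLE) :=
        isLineMul_iff_of_adjacentAt (C := C) (D := D) (E := E) (L := L) hk hE hLE
      grind
    rw [prodGenGB, Matrix.mul_apply, Finset.sum_congr rfl fun E _ ↦ hterm E]
    change _ = if Q then 1 else 0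
    by_cases hQ : Q
    · simp only [hQ, true_and, if_true]
      exact sum_ite_eq_one_of_existsUnique (existsUnique_adjacentAt_le hk
        (isAtom_colSpan_one (Nat.zero_lt_of_lt hk) D) hQ.1.1 hQ.1.2)
    · simp only [hQ, false_and, if_false, Finset.sum_const_zero]

lemma sum_prodGenGB_apply (hn : 0 < n) (C D : Cosets F n) :
    (∑ k ∈ Finset.range n, prodGenGB F n K k) C D =
      if IsLineMul (colSpan F n D 1) C D then 1 else 0 := by
  have hsum := sum_range_ite_succ_and_not (R := K) (fun k ↦ colSpan F n D 1 ≤ colSpan F n C k)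
    (fun k h ↦ h.trans (colSpan_mono C k.le_succ)) n
  have hbot : ¬colSpan F n D 1 ≤ colSpan F n C 0 := by
    rw [colSpan_zero, le_bot_iff]
    exact (isAtom_colSpan_one hn D).ne_bot
  rw [colSpan_eq_top C le_rfl, if_pos le_top, if_neg hbot, sub_zero] at hsum
  rw [Matrix.sum_apply, Finset.sum_congr rfl fun k hk ↦ prodGenGB_apply (Finset.mem_range.1 hk) C D]
  split_ifs with h
  · simpa only [h, and_true] using hsum
  · simp only [h, and_false, if_false, Finset.sum_const_zero]

/-- The line `V_1` of the flag of a coset, as a point of projective space. -/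
def firstLine {𝕜 : Type} [Field 𝕜] (hn : 0 < n) (D : Cosets 𝕜 n) :
    Projectivization 𝕜 (Fin n → 𝕜) :=
  .mk 𝕜 (D.out.val.col ⟨0, hn⟩) (col_ne_zero D.out _)

variable {𝕜 : Type} [Field 𝕜]

lemma firstLine_submodule (hn : 0 < n) (D : Cosets 𝕜 n) :
    (firstLine hn D).submodule = colSpan 𝕜 n D 1 := by
  rw [firstLine, Projectivization.submodule_mk]
  refine .trans ?_ (colFlag_succ D.out.val hn).symm
  rw [colFlag_zero, sup_bot_eq]

lemma iOfLine_firstLine (hn : 0 < n) (D : Cosets 𝕜 n) :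
    iOfLine 𝕜 n (firstLine hn D) = pivotRow 𝕜 n D := by
  obtain ⟨a, ha⟩ := Projectivization.exists_smul_eq_mk_rep 𝕜 _ (col_ne_zero D.out ⟨0, hn⟩)
  rw [iOfLine, pivotRow]
  congr 1
  ext i
  refine exists_congr fun hi ↦ ?_
  rw [firstLine, ← ha, Pi.smul_apply, Units.smul_def, smul_eq_mul, mul_ne_zero_iff]
  exact and_iff_right a.ne_zero

lemma XGB_eq_diagonal [Fintype 𝕜] (hn : 0 < n) (x : Fin n → K) :
    XGB 𝕜 n K x = Matrix.diagonal fun D ↦ lineWeight 𝕜 n K x (firstLine hn D) := by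
  ext C D
  rw [Matrix.diagonal_apply, XGB, lineWeight]
  simp only [iOfLine_firstLine, eq_comm]

lemma TGB_apply (hn : 0 < n) (x : Fin n → K) (C D : Cosets F n) :
    TGB F n K x C D =
      if IsLineMul (colSpan F n D 1) C D then lineWeight F n K x (firstLine hn D) else 0 := by
  rw [TGB, XGB_eq_diagonal hn, Matrix.mul_diagonal, sum_prodGenGB_apply hn, ite_mul, one_mul,
    zero_mul]

lemma leftLRBMat_apply (hn : 0 < n) (x : Fin n → K) (C D : Cosets F n) :
    leftLRBMat F n K x D C =
      if IsLineMul (colSpan F n D 1) C D then lineWeight F n K x (firstLine hn D) else 0 := by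
  have heq_firstLine (p : Projectivization F (Fin n → F)) (hp : IsLineMul p.submodule C D) :
      p = firstLine hn D := by
    have hp_ne : p.submodule ≠ ⊥ := by
      rw [p.submodule_eq, Ne, Submodule.span_singleton_eq_bot]
      exact p.rep_nonzero
    apply Projectivization.submodule_injective
    rw [firstLine_submodule, hp.colSpan_one_eq hn hp_ne]
  rw [leftLRBMat, Fintype.sum_eq_single (firstLine hn D) fun p hne ↦
    mul_eq_zero_of_right _ (if_neg (mt (heq_firstLine p) hne))]
  simp only [firstLine_submodule, mul_ite, mul_one, mul_zero]
  exact if_congr Iff.rfl rfl rfl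

lemma TGB_eq_transpose_leftLRBMat (x : Fin n → K) :
    TGB F n K x = (leftLRBMat F n K x)ᵀ := by
  ext C D
  rw [Matrix.transpose_apply]
  obtain rfl | hn := n.eq_zero_or_pos
  · simp [TGB, leftLRBMat]
  · rw [TGB_apply hn, leftLRBMat_apply hn]

end Operator

theorem qTsetlin_flags_is_LRB_general (F : Type) [Field F] [Fintype F] [DecidableEq F] (n : ℕ)
    (K : Type) [Field K] (_hq : (Fintype.card F : K) ≠ 0) (x : Fin n → K) :
    (∀ C D : Cosets F n,
      TGB F n K x C D =
        ∑ p : Projectivization F (Fin n → F),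
          lineWeight F n K x p *
            (if ∀ d : ℕ, d ≤ n →
                colSpan F n D d
                  = addLine F n (Projectivization.submodule p) (colSpan F n C) d
             then 1 else 0)) ∧
    TGB F n K x = (leftLRBMat F n K x).transpose :=
  ⟨fun C D ↦ congrFun₂ (TGB_eq_transpose_leftLRBMat x) C D, TGB_eq_transpose_leftLRBMat x⟩

/-- Let `q` be a prime power (the cardinality of the finite field `F`)
and `x` arbitrary complex weights.  Identifying cosets with complete flags via column
spans: (1) the row of `T_{G/B}(q,x)` at a flag `F` is
`∑_{lines L} (x_{i(L)}/q^{n-i(L)}) (V_0 ⊆ L ⊆ L+V_1 ⊆ ⋯ ⊆ L+V_{n-1} ⊆ V_n)ˆ`; and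
(2) consequently the transition matrix of `T_{G/B}(q,x)` equals the transpose of the
matrix of the left-multiplication operator in the q-free left regular band. -/
theorem qTsetlin_flags_is_LRB (F : Type) [Field F] [Fintype F] [DecidableEq F]
    (n : ℕ) (x : Fin n → ℂ) :
    (∀ C D : Cosets F n,
      TGB F n ℂ x C D =
        ∑ p : Projectivization F (Fin n → F),
          lineWeight F n ℂ x p *
            (if ∀ d : ℕ, d ≤ n →
                colSpan F n D d
                  = addLine F n (Projectivization.submodule p) (colSpan F n C) d
             then 1 else 0)) ∧
    TGB F n ℂ x = (leftLRBMat F n ℂ x).transpose :=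
  qTsetlin_flags_is_LRB_general F n ℂ (Nat.cast_ne_zero.2 Fintype.card_ne_zero) x

end QTsetlin
end
end

section
/- Let M be an ℓ×ℓ matrix with entries in the field ℂ(q) of rational functions in one variable q, let ξ_1,…,ξ_j ∈ ℂ(q) be pairwise distinct, and let m_1,…,m_j be nonnegative integers. Suppose: (1) for infinitely many complex numbers q_0, all entries of M and all ξ_i are defined at q_0 and the evaluated matrix M(q_0) satisfies ∏_{i=1}^j ( M(q_0) − ξ_i(q_0)·Id ) = 0; and (2) all entries of M and all ξ_i are defined at q_0 = 1, the values ξ_1(1),…,ξ_j(1) are pairwise distinct, and the characteristic polynomial of M(1) equals ∏_{i=1}^j (t − ξ_i(1))^{m_i}. Then the characteristic polynomial of M over ℂ(q) equals ∏_{i=1}^j (t − ξ_i)^{m_i}. -/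
/-!
STATEMENT 17: the specialization lemma for characteristic polynomials of matrices over
the field ℂ(q) of rational functions.
-/

open scoped Classical

noncomputable section

namespace QTsetlin

/-- Entrywise evaluation at `q₀ ∈ ℂ` of a matrix with entries in `ℂ(q)`. -/
def evalMat {l : ℕ} (q₀ : ℂ) (M : Matrix (Fin l) (Fin l) (RatFunc ℂ)) :
    Matrix (Fin l) (Fin l) ℂ :=
  fun a b => (M a b).eval (RingHom.id ℂ) q₀

/-!
Each entry of `∏ᵢ (M - ξᵢ)` is a rational function with infinitely many zeros, so `M` is annihilated
by `∏ᵢ (t - ξᵢ)`. The characteristic polynomial divides a power of any annihilating polynomial,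
hence equals `∏ᵢ (t - ξᵢ) ^ kᵢ` for some exponents `kᵢ`. Since the values `ξᵢ(1)` are distinct,
the multiplicities `kᵢ` survive evaluation at `1` and can be read off from the characteristic
polynomial of `M(1)`.
-/

open Polynomial

section Annihilation

variable {R S n ι : Type*} [CommRing R] [CommRing S] [Fintype n] [DecidableEq n] [Fintype ι]

theorem map_prod_X_sub_C_pow (φ : R →+* S) (x : ι → R) (k : ι → ℕ) :
    (∏ i, (X - C (x i)) ^ k i).map φ = ∏ i, (X - C (φ (x i))) ^ k i := by
  simp only [Polynomial.map_prod, Polynomial.map_pow, Polynomial.map_sub, map_X, map_C]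

theorem aeval_matrix_map (φ : R →+* S) (M : Matrix n n R) (p : R[X]) :
    aeval (M.map φ) (p.map φ) = (aeval M p).map φ := by
  have h_scalar : (algebraMap S (Matrix n n S)).comp φ =
      φ.mapMatrix.comp (algebraMap R (Matrix n n R)) := by
    ext a i j
    simp [Matrix.algebraMap_matrix_apply, apply_ite φ]
  exact (map_aeval_eq_aeval_map h_scalar p M).symm

theorem aeval_map_prod_X_sub_C (φ : R →+* S) (M : Matrix n n R) (x : ι → R) :
    aeval (M.map φ) (∏ i, (X - C (φ (x i)))) = (aeval M (∏ i, (X - C (x i)))).map φ := by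
  rw [← aeval_matrix_map, Polynomial.map_prod]
  simp only [Polynomial.map_sub, map_X, map_C]

theorem aeval_prod_X_sub_C_eq_list_prod {A : Type*} [Ring A] [Algebra R A] {j : ℕ} (a : A)
    (x : Fin j → R) :
    aeval a (∏ i, (X - C (x i))) = ((List.finRange j).map fun i => a - x i • (1 : A)).prod := by
  rw [← List.prod_ofFn, map_list_prod, List.ofFn_eq_map, List.map_map]
  simp [Function.comp_def, Algebra.algebraMap_eq_smul_one]

/-- The factor theorem in `R[X][Y]`, specialized at `Y = M`. -/
theorem charmatrix_dvd_scalar_sub_map_aeval (M : Matrix n n R) (p : R[X]) :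
    M.charmatrix ∣ Matrix.scalar n p - (aeval M p).map C := by
  have h_factor : (C X - X : R[X][X]) ∣ C p - p.map C := by
    rw [← neg_dvd, ← dvd_neg, neg_sub, neg_sub]
    simpa [eval_map] using X_sub_C_dvd_sub_C_eval (a := (X : R[X])) (p := p.map C)
  have h_matrix := map_dvd (aeval (R := R[X]) (M.map C)) h_factor
  rwa [map_sub, map_sub, aeval_X, aeval_C, aeval_C, aeval_matrix_map] at h_matrix

theorem charpoly_dvd_pow_card_of_aeval_eq_zero {M : Matrix n n R} {p : R[X]}
    (hp : aeval M p = 0) : M.charpoly ∣ p ^ Fintype.card n := by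
  have h_dvd : M.charmatrix ∣ Matrix.scalar n p := by
    simpa [hp] using charmatrix_dvd_scalar_sub_map_aeval M p
  simpa [Matrix.charpoly] using map_dvd Matrix.detMonoidHom h_dvd

end Annihilation

section Multiplicities

variable {R S n ι : Type*} [CommRing R] [IsDomain R] [CommRing S] [IsDomain S]
  [Fintype n] [DecidableEq n] [Fintype ι]

theorem rootMultiplicity_prod_X_sub_C_pow {x : ι → R} (hx : Function.Injective x) (k : ι → ℕ)
    (i : ι) : (∏ i, (X - C (x i)) ^ k i).rootMultiplicity (x i) = k i := by
  have h_ne : ∏ i, (X - C (x i)) ^ k i ≠ 0 :=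
    Finset.prod_ne_zero_iff.2 fun i _ => pow_ne_zero _ (X_sub_C_ne_zero _)
  rw [← count_roots, roots_prod _ _ h_ne, Multiset.count_bind]
  simp [Multiset.count_singleton, hx.eq_iff]

theorem eq_prod_X_sub_C_pow_rootMultiplicity {x : ι → R} (hx : Function.Injective x) {p : R[X]}
    (hp : p.Monic) (hsplits : p.Splits) (hroots : ∀ a, p.IsRoot a → a ∈ Set.range x) :
    p = ∏ i, (X - C (x i)) ^ p.rootMultiplicity (x i) := by
  have h_subset : p.roots.toFinset ⊆ Finset.univ.image x := fun a ha => by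
    simpa using hroots a (isRoot_of_mem_roots (Multiset.mem_toFinset.1 ha))
  calc p = (p.roots.map (X - C ·)).prod := hsplits.eq_prod_roots_of_monic hp
    _ = ∏ a ∈ p.roots.toFinset, (X - C a) ^ p.rootMultiplicity a :=
      prod_multiset_root_eq_finset_root
    _ = ∏ a ∈ Finset.univ.image x, (X - C a) ^ p.rootMultiplicity a :=
      Finset.prod_subset h_subset fun a _ ha => by
        rw [← count_roots, Multiset.count_eq_zero.2 (mt Multiset.mem_toFinset.2 ha), pow_zero]
    _ = ∏ i, (X - C (x i)) ^ p.rootMultiplicity (x i) := Finset.prod_image hx.injOn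

theorem charpoly_eq_prod_of_aeval_eq_zero {M : Matrix n n R} {x : ι → R}
    (hx : Function.Injective x) (hM : aeval M (∏ i, (X - C (x i))) = 0) :
    M.charpoly = ∏ i, (X - C (x i)) ^ M.charpoly.rootMultiplicity (x i) := by
  have h_dvd := charpoly_dvd_pow_card_of_aeval_eq_zero hM
  refine eq_prod_X_sub_C_pow_rootMultiplicity hx M.charpoly_monic ?_ fun a ha => ?_
  · exact ((Splits.prod fun i _ => Splits.X_sub_C (x i)).pow _).of_dvd
      ((monic_prod_X_sub_C x _).pow _).ne_zero h_dvd
  · have h_root := eq_zero_of_pow_eq_zero ((eval_pow _).symm.trans (ha.dvd h_dvd))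
    obtain ⟨i, -, hi⟩ := Finset.prod_eq_zero_iff.1 ((eval_prod _ _ _).symm.trans h_root)
    exact ⟨i, root_X_sub_C.1 hi⟩

theorem charpoly_eq_prod_of_charpoly_map_eq_prod (φ : R →+* S) {M : Matrix n n R} {x : ι → R}
    (hx : Function.Injective fun i => φ (x i)) (hM : aeval M (∏ i, (X - C (x i))) = 0)
    {m : ι → ℕ} (hchar : (M.map φ).charpoly = ∏ i, (X - C (φ (x i))) ^ m i) :
    M.charpoly = ∏ i, (X - C (x i)) ^ m i := by
  obtain ⟨k, h_charpoly⟩ : ∃ k : ι → ℕ, M.charpoly = ∏ i, (X - C (x i)) ^ k i :=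
    ⟨_, charpoly_eq_prod_of_aeval_eq_zero (.of_comp hx) hM⟩
  have h_map : ∏ i, (X - C (φ (x i))) ^ m i = ∏ i, (X - C (φ (x i))) ^ k i := by
    rw [← hchar, Matrix.charpoly_map, h_charpoly, map_prod_X_sub_C_pow]
  have h_exponents (i : ι) : k i = m i := by
    rw [← rootMultiplicity_prod_X_sub_C_pow hx k i, ← h_map,
      rootMultiplicity_prod_X_sub_C_pow hx m i]
  simpa only [h_exponents] using h_charpoly

end Multiplicities

section Evaluation

variable {K n ι : Type*} [Field K] [Fintype n] [DecidableEq n] [Fintype ι]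

/-- The local ring of rational functions that are defined at `c`, i.e. whose reduced denominator
does not vanish there. On it `RatFunc.eval`, which is `0` at a pole, is a ring homomorphism. -/
def regularAt (c : K) : Subring (RatFunc K) where
  carrier := {f | f.denom.eval c ≠ 0}
  mul_mem' {f g} hf hg h := mul_ne_zero hf hg <| by
    simpa only [eval_mul] using eval_eq_zero_of_dvd_of_eval_eq_zero (RatFunc.denom_mul_dvd f g) h
  add_mem' {f g} hf hg h := mul_ne_zero hf hg <| by
    simpa only [eval_mul] using eval_eq_zero_of_dvd_of_eval_eq_zero (RatFunc.denom_add_dvd f g) h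
  one_mem' := by simp
  zero_mem' := by simp
  neg_mem' {f} hf h := hf <| by
    have h_dvd : (-f).denom ∣ f.denom := (RatFunc.denom_dvd f.denom_ne_zero).2
      ⟨-f.num, by rw [map_neg, neg_div, RatFunc.num_div_denom]⟩
    exact eval_eq_zero_of_dvd_of_eval_eq_zero h_dvd h

/-- Evaluation at `c` as a ring homomorphism on the rational functions defined at `c`. -/
def evalRegularAt (c : K) : regularAt c →+* K where
  toFun f := (f : RatFunc K).eval (RingHom.id K) c
  map_one' := RatFunc.eval_one _ _
  map_zero' := RatFunc.eval_zero _ _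
  map_mul' f g := RatFunc.eval_mul _ _ f.2 g.2
  map_add' f g := RatFunc.eval_add _ _ f.2 g.2

theorem eq_zero_of_infinite_eval_eq_zero {f : RatFunc K}
    (hf : {c : K | f ∈ regularAt c ∧ f.eval (RingHom.id K) c = 0}.Infinite) : f = 0 := by
  refine RatFunc.num_eq_zero_iff.1 (eq_zero_of_infinite_isRoot _ (hf.mono ?_))
  rintro c ⟨h_regular, h_eval⟩
  exact (div_eq_zero_iff.1 h_eval).resolve_right h_regular

theorem aeval_prod_X_sub_C_eq_zero_of_infinite {M : Matrix n n (RatFunc K)} {ξ : ι → RatFunc K}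
    (h : {c : K | (∀ r s, M r s ∈ regularAt c) ∧ (∀ i, ξ i ∈ regularAt c) ∧
      aeval (M.map (RatFunc.eval (RingHom.id K) c))
        (∏ i, (X - C ((ξ i).eval (RingHom.id K) c))) = 0}.Infinite) :
    aeval M (∏ i, (X - C (ξ i))) = 0 := by
  ext r s
  refine eq_zero_of_infinite_eval_eq_zero (h.mono ?_)
  rintro c ⟨hM, hξ, hc⟩
  let M' : Matrix n n (regularAt c) := .of fun r s => ⟨M r s, hM r s⟩
  let ξ' : ι → regularAt c := fun i => ⟨ξ i, hξ i⟩
  let N := aeval M' (∏ i, (X - C (ξ' i)))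
  have h_coe : aeval M (∏ i, (X - C (ξ i))) = N.map (regularAt c).subtype :=
    aeval_map_prod_X_sub_C (regularAt c).subtype M' ξ'
  have h_eval : N.map (evalRegularAt c) = 0 :=
    (aeval_map_prod_X_sub_C (evalRegularAt c) M' ξ').symm.trans hc
  rw [h_coe]
  exact ⟨(N r s).2, congrFun₂ h_eval r s⟩

theorem charpoly_specialization_general (M : Matrix n n (RatFunc K)) (ξ : ι → RatFunc K)
    (m : ι → ℕ) (c : K)
    (hann : {a : K | (∀ r s, M r s ∈ regularAt a) ∧ (∀ i, ξ i ∈ regularAt a) ∧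
      aeval (M.map (RatFunc.eval (RingHom.id K) a))
        (∏ i, (X - C ((ξ i).eval (RingHom.id K) a))) = 0}.Infinite)
    (hM : ∀ r s, M r s ∈ regularAt c) (hξ : ∀ i, ξ i ∈ regularAt c)
    (hinj : Function.Injective fun i => (ξ i).eval (RingHom.id K) c)
    (hchar : (M.map (RatFunc.eval (RingHom.id K) c)).charpoly =
      ∏ i, (X - C ((ξ i).eval (RingHom.id K) c)) ^ m i) :
    M.charpoly = ∏ i, (X - C (ξ i)) ^ m i := by
  let incl := (regularAt c).subtype
  let M' : Matrix n n (regularAt c) := .of fun r s => ⟨M r s, hM r s⟩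
  let ξ' : ι → regularAt c := fun i => ⟨ξ i, hξ i⟩
  have h_ann : aeval M' (∏ i, (X - C (ξ' i))) = 0 :=
    Matrix.map_injective Subtype.val_injective <|
      (aeval_map_prod_X_sub_C incl M' ξ').symm.trans <|
        (aeval_prod_X_sub_C_eq_zero_of_infinite hann).trans (Matrix.map_zero _ rfl).symm
  have h_charpoly : M'.charpoly = ∏ i, (X - C (ξ' i)) ^ m i :=
    charpoly_eq_prod_of_charpoly_map_eq_prod (evalRegularAt c) hinj h_ann hchar
  calc M.charpoly = M'.charpoly.map incl := Matrix.charpoly_map M' incl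
    _ = (∏ i, (X - C (ξ' i)) ^ m i).map incl := by rw [h_charpoly]
    _ = ∏ i, (X - C (ξ i)) ^ m i := map_prod_X_sub_C_pow incl ξ' m

end Evaluation

/-- Let `M` be an `ℓ×ℓ` matrix over `ℂ(q)`, let `ξ_1,…,ξ_j ∈ ℂ(q)` be
pairwise distinct and `m_1,…,m_j` nonnegative integers.  Suppose (1) for infinitely many
`q₀ ∈ ℂ` all entries of `M` and all `ξ_i` are defined at `q₀` (no pole, i.e. the
denominator does not vanish) and `∏_i (M(q₀) - ξ_i(q₀)·Id) = 0`; and (2) everything is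
defined at `q₀ = 1`, the values `ξ_i(1)` are pairwise distinct, and the characteristic
polynomial of `M(1)` is `∏_i (t - ξ_i(1))^{m_i}`.  Then the characteristic polynomial of
`M` over `ℂ(q)` is `∏_i (t - ξ_i)^{m_i}`. -/
theorem charpoly_specialization (l j : ℕ) (M : Matrix (Fin l) (Fin l) (RatFunc ℂ))
    (ξ : Fin j → RatFunc ℂ) (hξ : Function.Injective ξ) (mm : Fin j → ℕ)
    (h1 : {q₀ : ℂ |
      (∀ a b : Fin l, Polynomial.eval q₀ (M a b).denom ≠ 0) ∧
      (∀ i : Fin j, Polynomial.eval q₀ (ξ i).denom ≠ 0) ∧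
      ((List.finRange j).map fun i =>
          evalMat q₀ M -
            (ξ i).eval (RingHom.id ℂ) q₀ • (1 : Matrix (Fin l) (Fin l) ℂ)).prod = 0
      }.Infinite)
    (h2a : ∀ a b : Fin l, Polynomial.eval (1 : ℂ) (M a b).denom ≠ 0)
    (h2b : ∀ i : Fin j, Polynomial.eval (1 : ℂ) (ξ i).denom ≠ 0)
    (h2c : Function.Injective fun i : Fin j => (ξ i).eval (RingHom.id ℂ) 1)
    (h2d : Matrix.charpoly (evalMat 1 M) =
      ∏ i : Fin j,
        (Polynomial.X - Polynomial.C ((ξ i).eval (RingHom.id ℂ) 1)) ^ mm i) :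
    Matrix.charpoly M =
      ∏ i : Fin j, (Polynomial.X - Polynomial.C (ξ i)) ^ mm i := by
  refine charpoly_specialization_general M ξ mm 1 (h1.mono ?_) h2a h2b h2c h2d
  exact fun _ ⟨hM, hx, h⟩ => ⟨hM, hx, (aeval_prod_X_sub_C_eq_list_prod _ _).trans h⟩

end QTsetlin
end
end

section
/- Let q be a prime power, let x_1,…,x_n be positive reals with x_1+⋯+x_n = 1, let Ψ(q,x) be the unique stationary distribution of T_{G/B}(q,x), and for π ∈ S_n let F_π denote the coset of the permutation matrix of π. Let 1 ≤ i < n and suppose x_i/q^{n−i} = x_{i+1}/q^{n−i−1}. Then for every π ∈ S_n, Ψ(q,x)_{F_π} = Ψ(q,x)_{F_{π'}}, where π' = s_i·π is obtained from π by interchanging the values i and i+1 in its one-line notation. -/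
open scoped Classical
set_option synthInstance.maxHeartbeats 1000000
set_option maxHeartbeats 1000000

noncomputable section

namespace QTsetlin

variable (F : Type) [Field F] [Fintype F] [DecidableEq F] (n : ℕ)

variable (K : Type) [Field K]

/-- `Ψ` is a stationary distribution: a nonnegative row vector with entries summing to `1`
such that `Ψ · T = c Ψ`. -/
def IsStationary {P : Type} [Fintype P] (T : Matrix P P ℝ) (c : ℝ) (Ψ : P → ℝ) : Prop :=
  (∀ p, 0 ≤ Ψ p) ∧ (∑ p, Ψ p = 1) ∧ Matrix.vecMul Ψ T = c • Ψ

end QTsetlin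

/-!
The `(C, D)` entry of `T_i` says whether the cosets `C` and `D` of `B` are distinct and lie in the
same coset of the minimal parabolic subgroup `P_i`, so `T_i` commutes with left translation by `G`.
Left translation by `s_i` can only interchange the leading rows `i` and `i + 1` of the first
column, so when the two weights agree it commutes with `X_{G/B}(q,x)`, hence with `T_{G/B}(q,x)`,
and it maps stationary distributions to stationary distributions. Since `B` and the cycles
`s_k ⋯ s_1` generate `G`, the operator `T_{G/B}(q,x)` is irreducible; by Perron–Frobenius its
stationary distribution is unique and therefore invariant under `s_i`.
-/

namespace QTsetlin

variable {F : Type} [Field F] {n : ℕ} {K : Type} [Field K]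

section NonnegativeMatrices

variable {R : Type*} [Semiring R] [PartialOrder R]
  {l m o : Type*} [Fintype m] {A : Matrix l m R} {A' : Matrix m o R}

lemma mul_apply_nonneg [IsOrderedRing R]
    (hA : ∀ i j, 0 ≤ A i j) (hA' : ∀ i j, 0 ≤ A' i j) (i : l) (j : o) : 0 ≤ (A * A') i j :=
  Finset.sum_nonneg fun a _ => mul_nonneg (hA i a) (hA' a j)

lemma mul_apply_pos [IsStrictOrderedRing R]
    (hA : ∀ i j, 0 ≤ A i j) (hA' : ∀ i j, 0 ≤ A' i j) {i : l} {a : m} {j : o}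
    (hia : 0 < A i a) (haj : 0 < A' a j) : 0 < (A * A') i j :=
  Finset.sum_pos' (fun b _ => mul_nonneg (hA i b) (hA' b j))
    ⟨a, Finset.mem_univ a, mul_pos hia haj⟩

end NonnegativeMatrices

section PerronFrobenius

variable {ι : Type*} [Fintype ι]

lemma pos_of_vecMul_eq_smul {R : Type*} [Ring R] [LinearOrder R] [IsStrictOrderedRing R]
    {A : Matrix ι ι R} {v : ι → R} {c : R} (hA : A.IsIrreducible) (hv : ∀ i, 0 ≤ v i)
    (hvA : Matrix.vecMul v A = c • v) {i : ι} (hi : 0 < v i) (j : ι) : 0 < v j := by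
  have pos_of_edge {a b : ι} (ha : 0 < v a) (hab : 0 < A a b) : 0 < v b := by
    have hcv : 0 < c * v b := calc
      0 < v a * A a b := mul_pos ha hab
      _ ≤ Matrix.vecMul v A b := Finset.single_le_sum (f := fun l => v l * A l b)
          (fun l _ => mul_nonneg (hv l) (hA.nonneg l b)) (Finset.mem_univ a)
      _ = c * v b := congrFun hvA b
    exact (hv b).lt_of_ne' (right_ne_zero_of_mul hcv.ne')
  let := A.toQuiver
  obtain ⟨p, -⟩ := hA.connected i j
  induction p with
  | nil => exact hi
  | cons _ e ih => exact pos_of_edge ih e.down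

/-- The difference of `w` and the largest multiple of `v` below it vanishes somewhere, hence
everywhere. -/
lemma exists_eq_smul_of_vecMul_eq_smul {R : Type*} [Field R] [LinearOrder R]
    [IsStrictOrderedRing R] {A : Matrix ι ι R} {v w : ι → R} {c : R} (hA : A.IsIrreducible)
    (hv : ∀ i, 0 < v i) (hvA : Matrix.vecMul v A = c • v) (hwA : Matrix.vecMul w A = c • w) :
    ∃ r : R, w = r • v := by
  cases isEmpty_or_nonempty ι
  · exact ⟨0, Subsingleton.elim _ _⟩
  obtain ⟨i₀, hi₀⟩ := Finite.exists_min fun i => w i / v i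
  set r := w i₀ / v i₀
  have hd_nonneg (i : ι) : 0 ≤ (w - r • v) i := by
    simpa [sub_nonneg] using (le_div_iff₀ (hv i)).1 (hi₀ i)
  have hdA : Matrix.vecMul (w - r • v) A = c • (w - r • v) := by
    rw [Matrix.sub_vecMul, Matrix.smul_vecMul, hvA, hwA, smul_sub, smul_comm]
  have hd_zero : (w - r • v) i₀ = 0 := by
    simp [r, div_mul_cancel₀ _ (hv i₀).ne']
  refine ⟨r, sub_eq_zero.1 <| funext fun i => ?_⟩
  by_contra hi
  exact (pos_of_vecMul_eq_smul hA hd_nonneg hdA ((hd_nonneg i).lt_of_ne' hi) i₀).ne' hd_zero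

end PerronFrobenius

namespace IsStationary

variable {P : Type} [Fintype P] {T : Matrix P P ℝ} {c : ℝ} {Ψ Φ : P → ℝ}

lemma pos (hT : T.IsIrreducible) (hΨ : IsStationary T c Ψ) (p : P) : 0 < Ψ p := by
  obtain ⟨hΨ_nonneg, hΨ_sum, hΨT⟩ := hΨ
  obtain ⟨p₀, -, hp₀⟩ : ∃ p₀ ∈ Finset.univ, 0 < Ψ p₀ :=
    (Finset.sum_pos_iff_of_nonneg fun p _ => hΨ_nonneg p).1 (hΨ_sum ▸ one_pos)
  exact pos_of_vecMul_eq_smul hT hΨ_nonneg hΨT hp₀ p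

lemma unique (hT : T.IsIrreducible) (hΨ : IsStationary T c Ψ) (hΦ : IsStationary T c Φ) :
    Φ = Ψ := by
  obtain ⟨r, rfl⟩ := exists_eq_smul_of_vecMul_eq_smul hT (hΨ.pos hT) hΨ.2.2 hΦ.2.2
  have hr : r = 1 := by simpa [← Finset.mul_sum, hΨ.2.1] using hΦ.2.1
  rw [hr, one_smul]

lemma comp_equiv {e : Equiv.Perm P} (he : T.submatrix e e = T) (hΨ : IsStationary T c Ψ) :
    IsStationary T c (Ψ ∘ e) := by
  obtain ⟨hΨ_nonneg, hΨ_sum, hΨT⟩ := hΨ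
  refine ⟨fun p => hΨ_nonneg (e p), (Equiv.sum_comp e Ψ).trans hΨ_sum, ?_⟩
  calc Matrix.vecMul (Ψ ∘ e) T
      = Matrix.vecMul ((Ψ ∘ e) ∘ e.symm) T ∘ e := by
        rw [← Matrix.submatrix_vecMul_equiv, he]
    _ = c • (Ψ ∘ e) := by
        rw [Function.comp_assoc, e.self_comp_symm, Function.comp_id, hΨT]
        rfl

end IsStationary

lemma isIrreducible_of_sup_closure_eq_top {G R : Type*} [Group G] [Finite G] [Ring R]
    [LinearOrder R] {H : Subgroup G} {S : Set G} (hS : S.Nonempty)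
    (hHS : H ⊔ Subgroup.closure S = ⊤) {A : Matrix (G ⧸ H) (G ⧸ H) R} (hA : ∀ C D, 0 ≤ A C D)
    (hpos : ∀ g, ∀ s ∈ S, 0 < A (QuotientGroup.mk g) (QuotientGroup.mk (g * s))) :
    A.IsIrreducible := by
  let := A.toQuiver
  have edge (g : G) {s : G} (hs : s ∈ S) :
      (QuotientGroup.mk g : G ⧸ H) ⟶ QuotientGroup.mk (g * s) := ⟨hpos g s hs⟩
  have exists_path (h g : G) :
      Nonempty (Quiver.Path (QuotientGroup.mk g : G ⧸ H) (QuotientGroup.mk (g * h))) := by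
    -- In a finite group no inverses are needed to generate, so edges need not be reversed.
    have hh : h ∈ Submonoid.closure ((H : Set G) ∪ S) := by
      rw [← Subgroup.closure_toSubmonoid_of_finite, Subgroup.closure_union, Subgroup.closure_eq,
        hHS]
      trivial
    induction hh using Submonoid.closure_induction generalizing g with
    | mem s hs =>
      rcases hs with hs | hs
      · rw [QuotientGroup.mk_mul_of_mem g hs]
        exact ⟨.nil⟩
      · exact ⟨(edge g hs).toPath⟩
    | one =>
      rw [mul_one]
      exact ⟨.nil⟩
    | mul h₁ h₂ _ _ ih₁ ih₂ =>
      obtain ⟨p₁⟩ := ih₁ g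
      obtain ⟨p₂⟩ := ih₂ (g * h₁)
      rw [← mul_assoc]
      exact ⟨p₁.comp p₂⟩
  refine ⟨hA, fun C D => ?_⟩
  obtain ⟨g, rfl⟩ := QuotientGroup.mk_surjective C
  obtain ⟨g', rfl⟩ := QuotientGroup.mk_surjective D
  obtain ⟨s, hs⟩ := hS
  obtain ⟨p⟩ := exists_path ((g * s)⁻¹ * g') (g * s)
  rw [mul_inv_cancel_left] at p
  exact ⟨(edge g hs).toPath.comp p, by simp [Quiver.Path.length_comp]⟩

/-- The subgroup of invertible block upper triangular matrices, where `b i` is the block of the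
index `i`; for monotone `b` this is a standard parabolic subgroup. -/
def parabolic {m α R : Type*} [Fintype m] [DecidableEq m] [LinearOrder α] [CommRing R]
    (b : m → α) : Subgroup (GL m R) where
  carrier := {g | (g : Matrix m m R).BlockTriangular b}
  one_mem' := Matrix.blockTriangular_one
  mul_mem' := Matrix.BlockTriangular.mul
  inv_mem' {g} hg := by
    let := g.invertible
    rw [Set.mem_ofPred_eq, Matrix.coe_units_inv]
    exact Matrix.blockTriangular_inv_of_blockTriangular hg

/-- The map that identifies `k + 1` with `k`: its fibres are the orbits of the transposition
`(k, k + 1)`, and they are the blocks of the minimal parabolic subgroup containing it. -/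
def collapse (k i : ℕ) : ℕ := if i = k + 1 then k else i

lemma collapse_mono (k : ℕ) : Monotone (collapse k) := by
  intro i j hij
  unfold collapse
  split_ifs <;> omega

/-- The minimal parabolic subgroup `P = B ∪ B s B` of `GL_n(F)`, where `s` is the transposition
of the 0-based indices `k` and `k + 1`. -/
abbrev minParabolic (k : ℕ) : Subgroup (GL (Fin n) F) := parabolic fun i : Fin n => collapse k i

lemma diag_ne_zero_of_mem_Bsub {p : GLn F n} (hp : p ∈ Bsub F n) (i : Fin n) : p i i ≠ 0 := by
  have hdet : (p : Matrix (Fin n) (Fin n) F).det ≠ 0 := p.det_ne_zero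
  rw [Matrix.det_of_isUpperTriangular (M := p.val) hp] at hdet
  exact Finset.prod_ne_zero_iff.1 hdet i (Finset.mem_univ i)

section MinimalParabolic

variable {k : ℕ} (hk : k + 1 < n)

lemma mem_Bsub_iff {p : GLn F n} :
    p ∈ Bsub F n ↔
      p ∈ minParabolic k ∧ p ⟨k + 1, hk⟩ ⟨k, Nat.lt_of_succ_lt hk⟩ = 0 := by
  constructor
  · intro hp
    exact ⟨fun i j hij => hp i j ((collapse_mono k).reflect_lt hij), hp _ _ (Nat.lt_succ_self k)⟩
  · rintro ⟨hp, hp0⟩ i j hij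
    by_cases hblock : (j : ℕ) = k ∧ (i : ℕ) = k + 1
    · obtain rfl : j = ⟨k, Nat.lt_of_succ_lt hk⟩ := Fin.ext hblock.1
      obtain rfl : i = ⟨k + 1, hk⟩ := Fin.ext hblock.2
      exact hp0
    · refine hp (?_ : collapse k j < collapse k i)
      unfold collapse
      split_ifs <;> omega

lemma diag_ne_zero_or_subdiag_ne_zero {p : GLn F n} (hp : p ∈ minParabolic k) :
    p ⟨k, Nat.lt_of_succ_lt hk⟩ ⟨k, Nat.lt_of_succ_lt hk⟩ ≠ 0 ∨
      p ⟨k + 1, hk⟩ ⟨k, Nat.lt_of_succ_lt hk⟩ ≠ 0 := by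
  by_contra! h
  exact diag_ne_zero_of_mem_Bsub ((mem_Bsub_iff hk).2 ⟨hp, h.2⟩) _ h.1

end MinimalParabolic

lemma permMat_mul_apply (π : Equiv.Perm (Fin n)) (M : Matrix (Fin n) (Fin n) F) (i j : Fin n) :
    (permMat F n π * M) i j = M (π⁻¹ i) j := by
  rw [Matrix.mul_apply, Finset.sum_eq_single (π⁻¹ i)]
  · simp [permMat]
  · intro l _ hl
    simp [permMat, Equiv.Perm.eq_inv_iff_eq.not.1 hl]
  · simp

lemma mul_permMat_apply (π : Equiv.Perm (Fin n)) (M : Matrix (Fin n) (Fin n) F) (i j : Fin n) :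
    (M * permMat F n π) i j = M i (π j) := by
  simp [Matrix.mul_apply, permMat]

variable (n) in
/-- The transposition of the 0-based indices `k` and `k + 1` of `Fin n`, with the junk value `1`
when `k + 1` is out of range. -/
def simpleSwap (k : ℕ) : Equiv.Perm (Fin n) :=
  if hk : k + 1 < n then Equiv.swap ⟨k, Nat.lt_of_succ_lt hk⟩ ⟨k + 1, hk⟩ else 1

lemma simpleSwap_eq_swap {k : ℕ} (hk : k + 1 < n) :
    simpleSwap n k = Equiv.swap ⟨k, Nat.lt_of_succ_lt hk⟩ ⟨k + 1, hk⟩ :=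
  dif_pos hk

lemma simpleSwap_inv (k : ℕ) : (simpleSwap n k)⁻¹ = simpleSwap n k := by
  unfold simpleSwap
  split_ifs <;> simp

lemma collapse_simpleSwap (k : ℕ) (i : Fin n) : collapse k (simpleSwap n k i) = collapse k i := by
  by_cases hk : k + 1 < n
  · rw [simpleSwap_eq_swap hk, Equiv.swap_apply_def]
    simp only [Fin.ext_iff, collapse]
    split_ifs <;> simp_all
  · simp [simpleSwap, hk]

section PermutationMatrices

variable [Fintype F] [DecidableEq F]

variable (F n) in
/-- The embedding of the symmetric group in `GL_n(F)` by permutation matrices. -/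
def permHom : Equiv.Perm (Fin n) →* GLn F n where
  toFun := permGL F n
  map_one' := Units.ext (permMat_one F n)
  map_mul' π σ := Units.ext (permMat_mul F n π σ).symm

lemma permHom_apply (π : Equiv.Perm (Fin n)) : permHom F n π = permGL F n π := rfl

lemma permGL_mul_apply (π : Equiv.Perm (Fin n)) (g : GLn F n) (i j : Fin n) :
    (permGL F n π * g) i j = g (π⁻¹ i) j :=
  permMat_mul_apply π g.val i j

lemma permGL_mem_parabolic {α : Type*} [LinearOrder α] {b : Fin n → α} {π : Equiv.Perm (Fin n)}
    (hπ : ∀ i, b (π i) = b i) : permGL F n π ∈ parabolic b := by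
  intro i j hij
  refine if_neg ?_
  rintro rfl
  exact hij.ne' (hπ j)

end PermutationMatrices

section HeckeGenerators

variable {k : ℕ}

lemma inv_mul_mem_Bsub_iff (hk : k + 1 < n) {u p : GLn F n} (hu : u ∈ minParabolic k) :
    u⁻¹ * p ∈ Bsub F n ↔
      p ∈ minParabolic k ∧ (u⁻¹ * p) ⟨k + 1, hk⟩ ⟨k, Nat.lt_of_succ_lt hk⟩ = 0 := by
  rw [mem_Bsub_iff hk, Subgroup.mul_mem_cancel_left _ (inv_mem hu)]

lemma transvGL_inv_mul_mem_Bsub_iff (hk : k + 1 < n) {p : GLn F n} (t : F)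
    (hne : (⟨k + 1, hk⟩ : Fin n) ≠ ⟨k, Nat.lt_of_succ_lt hk⟩) :
    (transvGL F n ⟨k + 1, hk⟩ ⟨k, Nat.lt_of_succ_lt hk⟩ hne t)⁻¹ * p ∈ Bsub F n ↔
      p ∈ minParabolic k ∧
        p ⟨k + 1, hk⟩ ⟨k, Nat.lt_of_succ_lt hk⟩ =
          t * p ⟨k, Nat.lt_of_succ_lt hk⟩ ⟨k, Nat.lt_of_succ_lt hk⟩ := by
  have hmem : transvGL F n ⟨k + 1, hk⟩ ⟨k, Nat.lt_of_succ_lt hk⟩ hne t ∈ minParabolic k :=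
    Matrix.blockTriangular_transvection (by simp [collapse]) t
  have hentry : ((transvGL F n ⟨k + 1, hk⟩ ⟨k, Nat.lt_of_succ_lt hk⟩ hne t)⁻¹ * p)
      ⟨k + 1, hk⟩ ⟨k, Nat.lt_of_succ_lt hk⟩ =
        p ⟨k + 1, hk⟩ ⟨k, Nat.lt_of_succ_lt hk⟩ +
          -t * p ⟨k, Nat.lt_of_succ_lt hk⟩ ⟨k, Nat.lt_of_succ_lt hk⟩ :=
    Matrix.transvection_mul_apply_same _ _ _ _ p.val
  rw [inv_mul_mem_Bsub_iff hk hmem, hentry, neg_mul, ← sub_eq_add_neg, sub_eq_zero]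

/-- The pairs `(a, c)` are homogeneous coordinates of a point of `ℙ¹(F)`; the points other than
`(1 : 0)` are `(0 : 1)` and the `(1 : t)` with `t ≠ 0`. -/
lemma ite_add_card_filter_eq_mul [Fintype F] [DecidableEq F] {a c : F} (hac : a ≠ 0 ∨ c ≠ 0) :
    (if a = 0 then 1 else 0) + ((Finset.univ.filter fun t : F => t ≠ 0 ∧ c = t * a).card : K) =
      if c = 0 then 0 else 1 := by
  rcases eq_or_ne a 0 with rfl | ha
  · simp [hac.resolve_left (not_not.2 rfl)]
  · have hfilter : (Finset.univ.filter fun t : F => t ≠ 0 ∧ c = t * a) =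
        if c = 0 then ∅ else {c / a} := by
      ext t
      split_ifs with hc
      · simp [hc, ha]
      · simp only [Finset.mem_filter, Finset.mem_univ, true_and, Finset.mem_singleton,
          eq_div_iff ha]
        exact ⟨fun h => h.2.symm, fun h => ⟨by rintro rfl; simp_all, h.symm⟩⟩
    rw [hfilter, if_neg ha, zero_add]
    split_ifs <;> simp

variable [Fintype F] [DecidableEq F]

lemma swap_inv_mul_mem_Bsub_iff (hk : k + 1 < n) {p : GLn F n} :
    (permGL F n (Equiv.swap ⟨k, Nat.lt_of_succ_lt hk⟩ ⟨k + 1, hk⟩))⁻¹ * p ∈ Bsub F n ↔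
      p ∈ minParabolic k ∧
        p ⟨k, Nat.lt_of_succ_lt hk⟩ ⟨k, Nat.lt_of_succ_lt hk⟩ = 0 := by
  rw [← simpleSwap_eq_swap hk,
    inv_mul_mem_Bsub_iff hk (permGL_mem_parabolic (collapse_simpleSwap k)), ← permHom_apply,
    ← map_inv, permHom_apply, permGL_mul_apply, inv_inv, simpleSwap_eq_swap hk,
    Equiv.swap_apply_right]

lemma genGB_mk_right (hk : k + 1 < n) (C : Cosets F n) (g : GLn F n) :
    genGB F n K k C (QuotientGroup.mk g) =
      if C.out⁻¹ * g ∈ minParabolic k ∧ C.out⁻¹ * g ∉ Bsub F n then 1 else 0 := by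
  rw [genGB, dif_pos hk]
  simp only [QuotientGroup.eq, mul_inv_rev, mul_assoc, swap_inv_mul_mem_Bsub_iff hk,
    transvGL_inv_mul_mem_Bsub_iff hk]
  generalize C.out⁻¹ * g = p
  by_cases hp : p ∈ minParabolic k
  · simpa [hp, mem_Bsub_iff hk] using
      ite_add_card_filter_eq_mul (K := K) (diag_ne_zero_or_subdiag_ne_zero hk hp)
  · simp [hp]

lemma genGB_mk_mk (hk : k + 1 < n) (g g' : GLn F n) :
    genGB F n K k (QuotientGroup.mk g) (QuotientGroup.mk g') =
      if g⁻¹ * g' ∈ minParabolic k ∧ g⁻¹ * g' ∉ Bsub F n then 1 else 0 := by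
  obtain ⟨b, hb⟩ := QuotientGroup.mk_out_eq_mul (Bsub F n) g
  have hbP : b.val⁻¹ ∈ minParabolic k := inv_mem ((mem_Bsub_iff hk).1 b.2).1
  rw [genGB_mk_right hk, hb, mul_inv_rev, mul_assoc, Subgroup.mul_mem_cancel_left _ hbP,
    Subgroup.mul_mem_cancel_left _ (inv_mem b.2)]

end HeckeGenerators

section LeftTranslation

variable [Fintype F] [DecidableEq F]

lemma genGB_smul (k : ℕ) (g : GLn F n) (C D : Cosets F n) :
    genGB F n K k (g • C) (g • D) = genGB F n K k C D := by
  by_cases hk : k + 1 < n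
  · obtain ⟨a, rfl⟩ := QuotientGroup.mk_surjective C
    obtain ⟨b, rfl⟩ := QuotientGroup.mk_surjective D
    rw [MulAction.Quotient.smul_mk, MulAction.Quotient.smul_mk, genGB_mk_mk hk, genGB_mk_mk hk,
      smul_eq_mul, smul_eq_mul, mul_inv_rev, mul_assoc, inv_mul_cancel_left]
  · simp [genGB, hk]

lemma prodGenGB_submatrix_toPerm (k : ℕ) (g : GLn F n) :
    (prodGenGB F n K k).submatrix (MulAction.toPerm g) (MulAction.toPerm g) =
      prodGenGB F n K k := by
  induction k with
  | zero => exact Matrix.submatrix_one_equiv _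
  | succ k ih =>
    rw [prodGenGB, ← Matrix.submatrix_mul_equiv _ _ _ (MulAction.toPerm g), ih]
    congr 1
    ext C D
    exact genGB_smul k g C D

lemma TGB_submatrix_toPerm {x : Fin n → K} {g : GLn F n}
    (hX : ∀ C D, XGB F n K x (g • C) (g • D) = XGB F n K x C D) :
    (TGB F n K x).submatrix (MulAction.toPerm g) (MulAction.toPerm g) = TGB F n K x := by
  rw [TGB, ← Matrix.submatrix_mul_equiv _ _ _ (MulAction.toPerm g)]
  congr 1
  · ext C D
    simp only [Matrix.submatrix_apply, Matrix.sum_apply]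
    exact Finset.sum_congr rfl fun k _ => congrFun₂ (prodGenGB_submatrix_toPerm k g) C D
  · ext C D
    exact hX C D

end LeftTranslation

section PivotRow

lemma pivotRow_mk (g : GLn F n) :
    pivotRow F n (QuotientGroup.mk g) =
      sInf {i : ℕ | ∃ h : i < n, g ⟨i, h⟩ ⟨0, Nat.zero_lt_of_lt h⟩ ≠ 0} := by
  obtain ⟨⟨b, hb⟩, hgb⟩ := QuotientGroup.mk_out_eq_mul (Bsub F n) g
  have firstCol (i : ℕ) (h : i < n) : (g * b) ⟨i, h⟩ ⟨0, Nat.zero_lt_of_lt h⟩ =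
      g ⟨i, h⟩ ⟨0, Nat.zero_lt_of_lt h⟩ *
        b ⟨0, Nat.zero_lt_of_lt h⟩ ⟨0, Nat.zero_lt_of_lt h⟩ := by
    rw [Units.val_mul, Matrix.mul_apply, Finset.sum_eq_single ⟨0, Nat.zero_lt_of_lt h⟩]
    · intro l _ hl
      rw [hb l _ (Nat.pos_of_ne_zero fun h0 => hl (Fin.ext h0)), mul_zero]
    · simp
  unfold pivotRow
  congr! 5 with i h
  simp only [hgb, firstCol i h, ne_eq, mul_eq_zero, diag_ne_zero_of_mem_Bsub hb, or_false]

lemma pivotRow_mk_le {g : GLn F n} {i : Fin n} (hi : g i ⟨0, i.pos⟩ ≠ 0) :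
    pivotRow F n (QuotientGroup.mk g) ≤ i := by
  rw [pivotRow_mk]
  exact Nat.sInf_le ⟨i.2, hi⟩

lemma exists_pivotRow_mk (hn : 0 < n) (g : GLn F n) :
    ∃ r : Fin n, pivotRow F n (QuotientGroup.mk g) = r ∧ g r ⟨0, hn⟩ ≠ 0 := by
  have hne : {i : ℕ | ∃ h : i < n, g ⟨i, h⟩ ⟨0, Nat.zero_lt_of_lt h⟩ ≠ 0}.Nonempty := by
    by_contra! hempty
    refine g.det_ne_zero (Matrix.det_eq_zero_of_column_eq_zero ⟨0, hn⟩ fun i => ?_)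
    by_contra hi
    exact (hempty ▸ ⟨i.2, hi⟩ : (i : ℕ) ∈ (∅ : Set ℕ))
  obtain ⟨h, hr⟩ := Nat.sInf_mem hne
  exact ⟨⟨_, h⟩, pivotRow_mk g, hr⟩

variable [Fintype F] [DecidableEq F]

lemma collapse_pivotRow_simpleSwap_smul_le (hn : 0 < n) (k : ℕ) (C : Cosets F n) :
    collapse k (pivotRow F n (permGL F n (simpleSwap n k) • C)) ≤
      collapse k (pivotRow F n C) := by
  obtain ⟨g, rfl⟩ := QuotientGroup.mk_surjective C
  obtain ⟨r, hr, hgr⟩ := exists_pivotRow_mk hn g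
  have hsg : (permGL F n (simpleSwap n k) * g) (simpleSwap n k r) ⟨0, hn⟩ ≠ 0 := by
    rwa [permGL_mul_apply, Equiv.Perm.coe_inv, Equiv.symm_apply_apply]
  rw [hr, ← collapse_simpleSwap]
  exact collapse_mono k (pivotRow_mk_le hsg)

lemma collapse_pivotRow_simpleSwap_smul (hn : 0 < n) (k : ℕ) (C : Cosets F n) :
    collapse k (pivotRow F n (permGL F n (simpleSwap n k) • C)) =
      collapse k (pivotRow F n C) := by
  have hss : permGL F n (simpleSwap n k) • permGL F n (simpleSwap n k) • C = C := by
    rw [smul_eq_iff_eq_inv_smul, ← permHom_apply, ← map_inv, simpleSwap_inv]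
  have hle := collapse_pivotRow_simpleSwap_smul_le hn k (permGL F n (simpleSwap n k) • C)
  rw [hss] at hle
  exact (collapse_pivotRow_simpleSwap_smul_le hn k C).antisymm hle

end PivotRow

section Weights

variable [Fintype F] {x : Fin n → K}

lemma XGB_apply_self {C : Cosets F n} {r : Fin n} (hr : pivotRow F n C = r) :
    XGB F n K x C C = x r / (Fintype.card F : K) ^ (n - 1 - (r : ℕ)) := by
  simp [XGB, hr]

lemma eq_of_collapse_eq {α : Type*} {y : Fin n → α} {k : ℕ} (hk : k + 1 < n)
    (hy : y ⟨k, Nat.lt_of_succ_lt hk⟩ = y ⟨k + 1, hk⟩) {r r' : Fin n}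
    (h : collapse k r = collapse k r') : y r = y r' := by
  have y_collapse (i : Fin n) (hi : collapse k i < n) : y i = y ⟨collapse k i, hi⟩ := by
    by_cases hik : (i : ℕ) = k + 1
    · obtain rfl : i = ⟨k + 1, hk⟩ := Fin.ext hik
      simp [collapse, hy]
    · simp [collapse, hik]
  have collapse_lt (i : Fin n) : collapse k i < n := by
    unfold collapse
    split_ifs <;> omega
  rw [y_collapse r (collapse_lt r), y_collapse r' (collapse_lt r')]
  simp only [h]

lemma XGB_simpleSwap_smul [DecidableEq F] {k : ℕ} (hk : k + 1 < n)
    (hy : x ⟨k, Nat.lt_of_succ_lt hk⟩ / (Fintype.card F : K) ^ (n - 1 - k) =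
      x ⟨k + 1, hk⟩ / (Fintype.card F : K) ^ (n - 1 - (k + 1))) (C D : Cosets F n) :
    XGB F n K x (permGL F n (simpleSwap n k) • C) (permGL F n (simpleSwap n k) • D) =
      XGB F n K x C D := by
  by_cases hDC : D = C
  · subst hDC
    have exists_pivotRow (E : Cosets F n) : ∃ r : Fin n, pivotRow F n E = r := by
      obtain ⟨g, rfl⟩ := QuotientGroup.mk_surjective E
      exact (exists_pivotRow_mk (Nat.zero_lt_of_lt hk) g).imp fun _ h => h.1
    obtain ⟨r, hr⟩ := exists_pivotRow D
    obtain ⟨r', hr'⟩ := exists_pivotRow (permGL F n (simpleSwap n k) • D)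
    have hcollapse := collapse_pivotRow_simpleSwap_smul (Nat.zero_lt_of_lt hk) k D
    rw [hr, hr'] at hcollapse
    rw [XGB_apply_self hr, XGB_apply_self hr']
    exact eq_of_collapse_eq (y := fun r => x r / (Fintype.card F : K) ^ (n - 1 - (r : ℕ))) hk hy
      hcollapse
  · simp [XGB, hDC]

end Weights

variable (n) in
/-- The cycle `s_k ⋯ s_1` of the symmetric group (1-based indices), a permutation occurring in the
product `T_k ⋯ T_1` of Hecke generators. -/
def cyc : ℕ → Equiv.Perm (Fin n)
  | 0 => 1
  | k + 1 => simpleSwap n k * cyc k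

section Positivity

variable [LinearOrder K] [IsStrictOrderedRing K]

variable [Fintype F]

lemma XGB_nonneg {x : Fin n → K} (hx : ∀ i, 0 ≤ x i) (C D : Cosets F n) :
    0 ≤ XGB F n K x C D := by
  unfold XGB
  split_ifs with _ hC
  · exact div_nonneg (hx _) (by positivity)
  · rfl
  · rfl

lemma XGB_self_pos (hn : 0 < n) {x : Fin n → K} (hx : ∀ i, 0 < x i) (C : Cosets F n) :
    0 < XGB F n K x C C := by
  obtain ⟨g, rfl⟩ := QuotientGroup.mk_surjective C
  obtain ⟨r, hr, -⟩ := exists_pivotRow_mk hn g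
  rw [XGB_apply_self hr]
  have hq : (0 : K) < Fintype.card F := Nat.cast_pos.2 Fintype.card_pos
  exact div_pos (hx r) (pow_pos hq _)

variable [DecidableEq F]

lemma genGB_nonneg (k : ℕ) (C D : Cosets F n) : 0 ≤ genGB F n K k C D := by
  unfold genGB
  split_ifs <;> positivity

lemma prodGenGB_nonneg (k : ℕ) (C D : Cosets F n) : 0 ≤ prodGenGB F n K k C D := by
  induction k generalizing C D with
  | zero =>
    rw [prodGenGB, Matrix.one_apply]
    split_ifs <;> simp
  | succ k ih => exact mul_apply_nonneg (genGB_nonneg k) ih C D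

lemma sum_prodGenGB_nonneg (C D : Cosets F n) :
    0 ≤ (∑ k ∈ Finset.range n, prodGenGB F n K k) C D := by
  rw [Matrix.sum_apply]
  exact Finset.sum_nonneg fun k _ => prodGenGB_nonneg k C D

lemma TGB_nonneg {x : Fin n → K} (hx : ∀ i, 0 ≤ x i) (C D : Cosets F n) :
    0 ≤ TGB F n K x C D :=
  mul_apply_nonneg sum_prodGenGB_nonneg (XGB_nonneg hx) C D

lemma genGB_simpleSwap_pos {k : ℕ} (hk : k + 1 < n) (g : GLn F n) :
    0 < genGB F n K k (QuotientGroup.mk g)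
      (QuotientGroup.mk (g * permHom F n (simpleSwap n k))) := by
  have hP : permHom F n (simpleSwap n k) ∈ minParabolic k :=
    permGL_mem_parabolic (collapse_simpleSwap k)
  have hB : permHom F n (simpleSwap n k) ∉ Bsub F n := by
    rw [mem_Bsub_iff hk, not_and]
    intro _
    simp [permHom_apply, permGL, permMat, simpleSwap_eq_swap hk]
  rw [genGB_mk_mk hk, inv_mul_cancel_left, if_pos ⟨hP, hB⟩]
  exact one_pos

lemma prodGenGB_cyc_pos {k : ℕ} (hk : k < n) (g : GLn F n) :
    0 < prodGenGB F n K k (QuotientGroup.mk g)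
      (QuotientGroup.mk (g * permHom F n (cyc n k))) := by
  induction k generalizing g with
  | zero =>
    rw [cyc, map_one, mul_one, prodGenGB, Matrix.one_apply_eq]
    exact one_pos
  | succ k ih =>
    rw [cyc, map_mul, ← mul_assoc]
    exact mul_apply_pos (genGB_nonneg k) (prodGenGB_nonneg k) (genGB_simpleSwap_pos hk g)
      (ih (Nat.lt_of_succ_lt hk) _)

lemma TGB_cyc_pos {x : Fin n → K} (hx : ∀ i, 0 < x i) {k : ℕ} (hk : k < n) (g : GLn F n) :
    0 < TGB F n K x (QuotientGroup.mk g) (QuotientGroup.mk (g * permHom F n (cyc n k))) := by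
  refine mul_apply_pos sum_prodGenGB_nonneg (XGB_nonneg fun i => (hx i).le) ?_
    (XGB_self_pos (Nat.zero_lt_of_lt hk) hx _)
  rw [Matrix.sum_apply]
  exact Finset.sum_pos' (fun j _ => prodGenGB_nonneg j _ _)
    ⟨k, Finset.mem_range.2 hk, prodGenGB_cyc_pos hk g⟩

end Positivity

section Generation

lemma closure_range_simpleSwap : Subgroup.closure (Set.range (simpleSwap n)) = ⊤ := by
  cases n with
  | zero => exact Subsingleton.elim _ _
  | succ m =>
    have hswaps : (Set.range fun i : Fin m => Equiv.swap i.castSucc i.succ) ⊆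
        Set.range (simpleSwap (m + 1)) := by
      rintro _ ⟨i, rfl⟩
      exact ⟨i, simpleSwap_eq_swap (Nat.succ_lt_succ i.2)⟩
    have hle := (Submonoid.closure_mono hswaps).trans (Subgroup.le_closure_toSubmonoid _)
    rw [Equiv.Perm.mclosure_swap_castSucc_succ] at hle
    exact top_le_iff.1 fun σ _ => hle (Submonoid.mem_top σ)

lemma closure_cyc : Subgroup.closure (cyc n '' Set.Iio n) = ⊤ := by
  rw [eq_top_iff, ← closure_range_simpleSwap, Subgroup.closure_le]
  rintro _ ⟨k, rfl⟩
  by_cases hk : k + 1 < n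
  · have hcyc : simpleSwap n k = cyc n (k + 1) * (cyc n k)⁻¹ := by
      rw [cyc, mul_inv_cancel_right]
    rw [hcyc]
    exact mul_mem (Subgroup.subset_closure ⟨k + 1, hk, rfl⟩)
      (inv_mem (Subgroup.subset_closure ⟨k, Nat.lt_of_succ_lt hk, rfl⟩))
  · rw [simpleSwap, dif_neg hk]
    exact one_mem _

lemma permMat_mul_transvection (σ : Equiv.Perm (Fin n)) (i j : Fin n) (t : F) :
    permMat F n σ * Matrix.transvection i j t =
      Matrix.transvection (σ i) (σ j) t * permMat F n σ := by
  ext a b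
  rw [permMat_mul_apply, mul_permMat_apply]
  simp [Matrix.transvection, Matrix.single_apply, Matrix.one_apply, Equiv.symm_apply_eq,
    Equiv.eq_symm_apply]

variable [Fintype F] [DecidableEq F]

lemma transvGL_mem_sup (i j : Fin n) (hij : i ≠ j) (t : F) :
    transvGL F n i j hij t ∈ Bsub F n ⊔ (permHom F n).range := by
  have mem_of_lt {i j : Fin n} (hij : i < j) :
      transvGL F n i j hij.ne t ∈ Bsub F n ⊔ (permHom F n).range :=
    (le_sup_left : Bsub F n ≤ _) (Matrix.blockTriangular_transvection hij.le t)
  rcases hij.lt_or_gt with hij | hji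
  · exact mem_of_lt hij
  · have hconj : transvGL F n i j hij t =
        (permHom F n (Equiv.swap i j))⁻¹ * transvGL F n j i hij.symm t *
          permHom F n (Equiv.swap i j) := by
      rw [mul_assoc, eq_inv_mul_iff_mul_eq]
      refine Units.ext ((permMat_mul_transvection _ i j t).trans ?_)
      rw [Equiv.swap_apply_left, Equiv.swap_apply_right]
      rfl
    have hswap : permHom F n (Equiv.swap i j) ∈ Bsub F n ⊔ (permHom F n).range :=
      (le_sup_right : (permHom F n).range ≤ _) ⟨_, rfl⟩
    rw [hconj]
    exact mul_mem (mul_mem (inv_mem hswap) (mem_of_lt hji)) hswap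

lemma Bsub_sup_range_permHom : Bsub F n ⊔ (permHom F n).range = ⊤ := by
  refine top_le_iff.1 fun g _ => ?_
  obtain ⟨g', hg', hg'g⟩ : ∃ g' ∈ Bsub F n ⊔ (permHom F n).range,
      (g' : Matrix (Fin n) (Fin n) F) = g := by
    refine Matrix.diagonal_transvection_induction_of_det_ne_zero
      (fun M => ∃ g' ∈ Bsub F n ⊔ (permHom F n).range, (g' : Matrix (Fin n) (Fin n) F) = M)
      g g.det_ne_zero ?_ ?_ ?_
    · intro D hD
      exact ⟨.mkOfDetNeZero _ hD,
        (le_sup_left : Bsub F n ≤ _) (Matrix.blockTriangular_diagonal D), rfl⟩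
    · rintro ⟨i, j, hij, t⟩
      exact ⟨_, transvGL_mem_sup i j hij t, rfl⟩
    · rintro _ _ - - ⟨a, ha, rfl⟩ ⟨b, hb, rfl⟩
      exact ⟨a * b, mul_mem ha hb, rfl⟩
  rwa [← Units.ext hg'g]

lemma Bsub_sup_closure_cyc :
    Bsub F n ⊔ Subgroup.closure ((permHom F n ∘ cyc n) '' Set.Iio n) = ⊤ := by
  rw [Set.image_comp, ← MonoidHom.map_closure, closure_cyc, ← MonoidHom.range_eq_map,
    Bsub_sup_range_permHom]

end Generation

section Invariance

variable [Fintype F] [DecidableEq F]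

lemma TGB_isIrreducible [LinearOrder K] [IsStrictOrderedRing K] (hn : 0 < n) {x : Fin n → K}
    (hx : ∀ i, 0 < x i) : (TGB F n K x).IsIrreducible := by
  refine isIrreducible_of_sup_closure_eq_top (Set.Nonempty.image _ ⟨0, hn⟩) Bsub_sup_closure_cyc
    (TGB_nonneg fun i => (hx i).le) ?_
  rintro g _ ⟨k, hk, rfl⟩
  exact TGB_cyc_pos hx hk g

lemma IsStationary.apply_smul_eq (hn : 0 < n) {x : Fin n → ℝ} (hx : ∀ i, 0 < x i) {c : ℝ}
    {Ψ : Cosets F n → ℝ} (hΨ : IsStationary (TGB F n ℝ x) c Ψ) {g : GLn F n}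
    (hX : ∀ C D, XGB F n ℝ x (g • C) (g • D) = XGB F n ℝ x C D) (C : Cosets F n) :
    Ψ (g • C) = Ψ C :=
  congrFun (hΨ.unique (TGB_isIrreducible hn hx)
    (hΨ.comp_equiv (TGB_submatrix_toPerm hX))) C

theorem stationary_value_swap_general {x : Fin n → ℝ} (hx : ∀ i, 0 < x i) {k : ℕ}
    (hk : k + 1 < n)
    (hy : x ⟨k, Nat.lt_of_succ_lt hk⟩ / (Fintype.card F : ℝ) ^ (n - 1 - k) =
      x ⟨k + 1, hk⟩ / (Fintype.card F : ℝ) ^ (n - 1 - (k + 1)))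
    {c : ℝ} {Ψ : Cosets F n → ℝ} (hΨ : IsStationary (TGB F n ℝ x) c Ψ) (C : Cosets F n) :
    Ψ (permGL F n (Equiv.swap ⟨k, Nat.lt_of_succ_lt hk⟩ ⟨k + 1, hk⟩) • C) = Ψ C := by
  rw [← simpleSwap_eq_swap hk]
  exact hΨ.apply_smul_eq (Nat.zero_lt_of_lt hk) hx (XGB_simpleSwap_smul hk hy) C

end Invariance

/-- Let `q` be a prime power (the cardinality of the finite field `F`)
and `x` positive weights summing to `1`. Suppose the paper's 1-based values `i` and `i+1`
(0-based `i₀` and `i₀+1`) satisfy `x_i / q^{n-i} = x_{i+1} / q^{n-i-1}`.  Then any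
stationary distribution of `T_{G/B}(q,x)` takes the same value on the permutation-matrix
cosets `F_π` and `F_{π'}`, where `π' = s_i π` interchanges the values `i` and `i+1`. -/
theorem stationary_value_swap (F : Type) [Field F] [Fintype F] [DecidableEq F]
    (n : ℕ) (x : Fin n → ℝ) (hx : ∀ i, 0 < x i) (hx1 : ∑ i, x i = 1)
    (i₀ : ℕ) (hi : i₀ + 1 < n)
    (hy : x ⟨i₀, Nat.lt_of_succ_lt hi⟩ / (Fintype.card F : ℝ) ^ (n - 1 - i₀)
        = x ⟨i₀ + 1, hi⟩ / (Fintype.card F : ℝ) ^ (n - 1 - (i₀ + 1)))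
    (Ψ : Cosets F n → ℝ) (hΨ : IsStationary (TGB F n ℝ x) (∑ i, x i) Ψ)
    (π : Equiv.Perm (Fin n)) :
    Ψ (QuotientGroup.mk (permGL F n π)) =
      Ψ (QuotientGroup.mk (permGL F n
        (Equiv.swap ⟨i₀, Nat.lt_of_succ_lt hi⟩ ⟨i₀ + 1, hi⟩ * π))) := by
  rw [← permHom_apply, ← permHom_apply, map_mul]
  exact (stationary_value_swap_general hx hi hy hΨ _).symm

end QTsetlin
end
end
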